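/- arXiv:0902.1105 — 2 statements merged into one kernel-verified Lean document; each statement's English description precedes it below -/
import Mathlib

section
/- In dimension 4, every finite set S of points on the unit sphere of EuclideanSpace ℝ (Fin 4) (i.e., ‖x‖ = 1 for all x ∈ S) such that any two distinct points of S are at Euclidean distance at least 1 has cardinality at most 24; that is, the kissing number in dimension 4 is at most 24. -/
/-!
This is Delsarte's linear programming method, corrected on a small cap. On `S³` the kernel
`U n ⟪x, y⟫`, with `U n` the Chebyshev polynomial of the second kind, is positive semidefinite:
up to a factor it is the Fischer product of two harmonic zonal polynomials. Hence a nonnegative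
combination `f` of the `U n` with constant term `200` satisfies
`200 * |S| ^ 2 ≤ ∑ x ∈ S, ∑ y ∈ S, f ⟪x, y⟫`, and it suffices to bound each row sum by
`4999 < 200 * 25`.

The diagonal term of a row is `f 1 = 3665`, and `f ≤ 0` on `[-27 / 50, 1 / 2]`, so only the points
in the cap `⟪x, y⟫ ≤ -27 / 50` around `-x` remain. The components of these points orthogonal to `x`
satisfy the positive semidefinite inequalities of degree at most two in `ℝ³`. A weighted sum of
them has nonpositive off-diagonal entries because points of `S` are at least `60°` apart, and its
diagonal entries then bound the contribution of the cap by `1334 = 4999 - 3665`.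
-/

open Polynomial (Chebyshev.U)
open scoped Nat RealInnerProductSpace

namespace KissingNumber

section Fischer

open MvPolynomial

variable {σ : Type*}

/-- The Fischer (apolar) form on real polynomials: the monomials are orthogonal, and the square norm
of `X ^ m` is `m! = ∏ i, (m i)!`. It makes multiplication by `X i` adjoint to `∂ / ∂ X i`. -/
noncomputable def fischer : MvPolynomial σ ℝ →ₗ[ℝ] MvPolynomial σ ℝ →ₗ[ℝ] ℝ :=
  (basisMonomials σ ℝ).constr ℝ fun m ↦ (m.prod fun _ k ↦ (k ! : ℝ)) • lcoeff ℝ m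

lemma fischer_monomial (m : σ →₀ ℕ) (a : ℝ) (g : MvPolynomial σ ℝ) :
    fischer (monomial m a) g = a * ((m.prod fun _ k ↦ (k ! : ℝ)) * coeff m g) := by
  have monomial_eq_smul : monomial m a = a • basisMonomials σ ℝ m := by
    simp [smul_monomial]
  rw [monomial_eq_smul, map_smul, fischer, Module.Basis.constr_basis]
  rfl

lemma fischer_self_nonneg (f : MvPolynomial σ ℝ) : 0 ≤ fischer f f := by
  have expand : fischer f f
      = ∑ m ∈ f.support, coeff m f * ((m.prod fun _ k ↦ (k ! : ℝ)) * coeff m f) := by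
    conv_lhs => enter [1, 2]; rw [f.as_sum]
    simp only [map_sum, LinearMap.sum_apply, fischer_monomial]
  rw [expand]
  refine Finset.sum_nonneg fun m _ ↦ ?_
  have factorial_pos : 0 < m.prod fun _ k ↦ (k ! : ℝ) :=
    Finset.prod_pos fun _ _ ↦ by positivity
  nlinarith [mul_nonneg factorial_pos.le (sq_nonneg (coeff m f))]

lemma prod_factorial_add_single (m : σ →₀ ℕ) (i : σ) :
    ((m + Finsupp.single i 1).prod fun _ k ↦ (k ! : ℝ))
      = (m i + 1) * m.prod fun _ k ↦ (k ! : ℝ) := by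
  classical
  have hsupp : m.support ⊆ insert i m.support := Finset.subset_insert _ _
  have hsupp' : (m + Finsupp.single i 1).support ⊆ insert i m.support := by
    intro j hj
    by_cases h : j = i
    · simp [h]
    · simpa [h, Finsupp.single_apply, Ne.symm h] using hj
  rw [Finsupp.prod_of_support_subset _ hsupp' _ (by simp),
    Finsupp.prod_of_support_subset _ hsupp _ (by simp),
    ← Finset.mul_prod_erase _ _ (Finset.mem_insert_self i _),
    ← Finset.mul_prod_erase _ _ (Finset.mem_insert_self i _), ← mul_assoc]
  congr 1
  · simp [Nat.factorial_succ]
  · refine Finset.prod_congr rfl fun j hj ↦ ?_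
    simp [(Finset.ne_of_mem_erase hj).symm]

lemma fischer_X_mul (i : σ) (f g : MvPolynomial σ ℝ) :
    fischer (X i * f) g = fischer f (pderiv i g) := by
  induction f using MvPolynomial.induction_on' with
  | add p q hp hq =>
    rw [mul_add, map_add, map_add, LinearMap.add_apply, LinearMap.add_apply, hp, hq]
  | monomial m a =>
    rw [X, monomial_mul, one_mul, add_comm, fischer_monomial, fischer_monomial, coeff_pderiv,
      prod_factorial_add_single]
    ring

variable [Fintype σ]

/-- The linear form `y ↦ x ⬝ᵥ y`, as a polynomial. -/
noncomputable def linearForm (x : σ → ℝ) : MvPolynomial σ ℝ := ∑ i, x i • X i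

/-- The quadratic form `y ↦ y ⬝ᵥ y`, as a polynomial. -/
noncomputable def normSq (σ : Type*) [Fintype σ] : MvPolynomial σ ℝ := ∑ i, X i ^ 2

/-- The derivative of polynomials in the direction `x`. -/
noncomputable def dirDeriv (x : σ → ℝ) : Derivation ℝ (MvPolynomial σ ℝ) (MvPolynomial σ ℝ) :=
  ∑ i, x i • pderiv i

/-- The Laplace operator on polynomials. -/
noncomputable def laplacian : MvPolynomial σ ℝ →ₗ[ℝ] MvPolynomial σ ℝ :=
  ∑ i, (pderiv i).toLinearMap ∘ₗ (pderiv i).toLinearMap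

lemma dirDeriv_apply (x : σ → ℝ) (f : MvPolynomial σ ℝ) :
    dirDeriv x f = ∑ i, x i • pderiv i f :=
  (congrFun (map_sum Derivation.coeFnAddMonoidHom (fun i ↦ x i • pderiv i) .univ) f).trans
    (Finset.sum_apply _ _ _)

lemma laplacian_apply (f : MvPolynomial σ ℝ) : laplacian f = ∑ i, pderiv i (pderiv i f) := by
  simp [laplacian]

lemma fischer_linearForm_mul (x : σ → ℝ) (f g : MvPolynomial σ ℝ) :
    fischer (linearForm x * f) g = fischer f (dirDeriv x g) := by
  simp only [linearForm, dirDeriv_apply, Finset.sum_mul, smul_mul_assoc, map_sum,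
    LinearMap.sum_apply, map_smul, LinearMap.smul_apply, fischer_X_mul]

lemma fischer_normSq_mul (f g : MvPolynomial σ ℝ) :
    fischer (normSq σ * f) g = fischer f (laplacian g) := by
  simp only [normSq, laplacian_apply, Finset.sum_mul, pow_two, mul_assoc, map_sum,
    LinearMap.sum_apply, fischer_X_mul]

lemma pderiv_linearForm (x : σ → ℝ) (i : σ) : pderiv i (linearForm x) = C (x i) := by
  classical
  simp [linearForm, pderiv_X, Pi.single_apply, smul_eq_C_mul]

lemma pderiv_normSq (i : σ) : pderiv i (normSq σ) = 2 * X i := by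
  classical
  simp [normSq, pderiv_X, Pi.single_apply, Derivation.leibniz_pow]

lemma isHomogeneous_linearForm (x : σ → ℝ) : (linearForm x).IsHomogeneous 1 :=
  IsHomogeneous.sum _ _ _ fun i _ ↦ (homogeneousSubmodule σ ℝ 1).smul_mem _ (isHomogeneous_X ℝ i)

lemma isHomogeneous_normSq : (normSq σ).IsHomogeneous 2 :=
  IsHomogeneous.sum _ _ _ fun i _ ↦ by simpa using (isHomogeneous_X ℝ i).pow 2

lemma isHomogeneous_dirDeriv (x : σ → ℝ) {f : MvPolynomial σ ℝ} {n : ℕ}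
    (hf : f.IsHomogeneous (n + 1)) : (dirDeriv x f).IsHomogeneous n := by
  rw [dirDeriv_apply]
  exact IsHomogeneous.sum _ _ _ fun i _ ↦ (homogeneousSubmodule σ ℝ n).smul_mem _ hf.pderiv

lemma eval_linearForm (x y : σ → ℝ) : eval y (linearForm x) = x ⬝ᵥ y := by
  simp [linearForm, dotProduct, smul_eval]

lemma eval_normSq (y : σ → ℝ) : eval y (normSq σ) = y ⬝ᵥ y := by
  simp [normSq, dotProduct, pow_two]

lemma eval_dirDeriv_self (x : σ → ℝ) {f : MvPolynomial σ ℝ} {n : ℕ} (hf : f.IsHomogeneous n) :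
    eval x (dirDeriv x f) = n * eval x f := by
  have euler := congrArg (eval x) hf.sum_X_mul_pderiv
  simpa [dirDeriv_apply, smul_eval] using euler

lemma fischer_linearForm_pow (x : σ → ℝ) (n : ℕ) {f : MvPolynomial σ ℝ} (hf : f.IsHomogeneous n) :
    fischer (linearForm x ^ n) f = n ! * eval x f := by
  induction n generalizing f with
  | zero =>
    obtain ⟨a, rfl⟩ : ∃ a, f = C a :=
      ⟨_, totalDegree_eq_zero_iff_eq_C.mp ((totalDegree_zero_iff_isHomogeneous _).mpr hf)⟩
    simpa using fischer_monomial (0 : σ →₀ ℕ) 1 (C a)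
  | succ n ih =>
    rw [pow_succ', fischer_linearForm_mul, ih (isHomogeneous_dirDeriv x hf),
      eval_dirDeriv_self x hf, Nat.factorial_succ]
    push_cast
    ring

lemma dirDeriv_linearForm (x y : σ → ℝ) : dirDeriv x (linearForm y) = C (x ⬝ᵥ y) := by
  simp [dirDeriv_apply, pderiv_linearForm, dotProduct, smul_eq_C_mul]

lemma dirDeriv_normSq (x : σ → ℝ) : dirDeriv x (normSq σ) = 2 * linearForm x := by
  simp only [dirDeriv_apply, pderiv_normSq, linearForm, Finset.mul_sum, mul_smul_comm]

lemma laplacian_linearForm_mul (x : σ → ℝ) (f : MvPolynomial σ ℝ) :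
    laplacian (linearForm x * f) = 2 * dirDeriv x f + linearForm x * laplacian f := by
  simp only [laplacian_apply, dirDeriv_apply, Derivation.leibniz, pderiv_linearForm, map_add,
    smul_eq_mul, pderiv_C, Finset.mul_sum, ← Finset.sum_add_distrib, smul_eq_C_mul]
  exact Finset.sum_congr rfl fun i _ ↦ by ring

lemma laplacian_normSq_mul {f : MvPolynomial σ ℝ} {n : ℕ} (hf : f.IsHomogeneous n) :
    laplacian (normSq σ * f)
      = (2 * Fintype.card σ + 4 * n : ℕ) * f + normSq σ * laplacian f := by
  have second_pderiv (i : σ) : pderiv i (pderiv i (normSq σ * f))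
      = 2 * f + 4 * (X i * pderiv i f) + normSq σ * pderiv i (pderiv i f) := by
    have pderiv_two_mul_X : pderiv i (2 * X i : MvPolynomial σ ℝ) = 2 := by
      rw [two_mul, map_add, pderiv_X_self]; norm_num
    simp only [Derivation.leibniz (pderiv i) (normSq σ), map_add, smul_eq_mul, pderiv_normSq,
      Derivation.leibniz (pderiv i) f, pderiv_two_mul_X]
    ring
  have euler := hf.sum_X_mul_pderiv
  simp only [laplacian_apply, second_pderiv, Finset.sum_add_distrib, ← Finset.mul_sum, euler,
    Finset.sum_const, Finset.card_univ, nsmul_eq_mul]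
  push_cast
  ring

variable {x : σ → ℝ}

/-- The zonal polynomial with axis `x`: the homogeneous polynomial of degree `n` that takes the
value `U n (x ⬝ᵥ y)` at every unit vector `y`, where `U n` is the Chebyshev polynomial of the second
kind. It is harmonic in four variables. -/
noncomputable def zonal (x : σ → ℝ) : ℕ → MvPolynomial σ ℝ
  | 0 => 1
  | 1 => 2 * linearForm x
  | n + 2 => 2 * (linearForm x * zonal x (n + 1)) - normSq σ * zonal x n

lemma eval_zonal {y : σ → ℝ} (hy : y ⬝ᵥ y = 1) (n : ℕ) :
    eval y (zonal x n) = (Chebyshev.U ℝ n).eval (x ⬝ᵥ y) := by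
  induction n using Nat.twoStepInduction with
  | zero => simp [zonal]
  | one => simp [zonal, eval_linearForm]
  | more n ih₀ ih₁ =>
    push_cast at ih₁ ⊢
    simp [zonal, eval_linearForm, eval_normSq, hy, ih₀, ih₁, mul_assoc]

lemma isHomogeneous_zonal (x : σ → ℝ) (n : ℕ) : (zonal x n).IsHomogeneous n := by
  induction n using Nat.twoStepInduction with
  | zero => exact isHomogeneous_one σ ℝ
  | one => exact (isHomogeneous_linearForm x).C_mul 2
  | more n ih₀ ih₁ =>
    have first := ((isHomogeneous_linearForm x).mul ih₁).C_mul 2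
    have second := isHomogeneous_normSq.mul ih₀
    rw [show 1 + (n + 1) = n + 2 by ring] at first
    rw [show 2 + n = n + 2 by ring] at second
    exact first.sub second

lemma normSq_dvd_zonal_sub (x : σ → ℝ) (n : ℕ) :
    normSq σ ∣ zonal x n - (2 : ℝ) ^ n • linearForm x ^ n := by
  induction n using Nat.twoStepInduction with
  | zero => simp [zonal]
  | one => simp [zonal, smul_eq_C_mul, map_ofNat C 2]
  | more n _ ih₁ =>
    have step : zonal x (n + 2) - (2 : ℝ) ^ (n + 2) • linearForm x ^ (n + 2)
        = 2 * linearForm x * (zonal x (n + 1) - (2 : ℝ) ^ (n + 1) • linearForm x ^ (n + 1))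
          - normSq σ * zonal x n := by
      simp only [zonal, smul_eq_C_mul, map_pow, map_ofNat C 2]
      ring
    rw [step]
    exact (ih₁.mul_left _).sub (dvd_mul_right _ _)

lemma dirDeriv_zonal_succ (hx : x ⬝ᵥ x = 1) (n : ℕ) :
    dirDeriv x (zonal x (n + 1)) = (n + 2) * zonal x n := by
  have dirDeriv_two_mul (f : MvPolynomial σ ℝ) : dirDeriv x (2 * f) = 2 * dirDeriv x f := by
    rw [two_mul, two_mul, map_add]
  induction n using Nat.twoStepInduction with
  | zero => simp [zonal, dirDeriv_two_mul, dirDeriv_linearForm, hx]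
  | one =>
    simp only [zonal, dirDeriv_two_mul, dirDeriv_linearForm, dirDeriv_normSq, hx, map_sub, mul_one,
      Derivation.leibniz, smul_eq_mul, map_one, Nat.cast_one]
    ring
  | more n ih₀ ih₁ =>
    rw [show n + 2 + 1 = (n + 1) + 2 by ring, zonal, map_sub, dirDeriv_two_mul, Derivation.leibniz,
      Derivation.leibniz, ih₀, show n + 1 + 1 = n + 2 by ring, ih₁, dirDeriv_linearForm,
      dirDeriv_normSq, hx, zonal]
    simp only [smul_eq_mul, map_one]
    push_cast
    ring

lemma laplacian_zonal (hσ : Fintype.card σ = 4) (hx : x ⬝ᵥ x = 1) (n : ℕ) :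
    laplacian (zonal x n) = 0 := by
  induction n using Nat.twoStepInduction with
  | zero => simp [zonal, laplacian_apply]
  | one => simp [zonal, laplacian_apply, two_mul, pderiv_linearForm]
  | more n ih₀ ih₁ =>
    rw [zonal, map_sub, two_mul, map_add, laplacian_linearForm_mul,
      laplacian_normSq_mul (isHomogeneous_zonal x n), ih₀, ih₁, dirDeriv_zonal_succ hx, hσ]
    push_cast
    ring

/-- Harmonic polynomials are Fischer-orthogonal to multiples of `normSq`, so only the leading term
`2 ^ n * linearForm x ^ n` of `zonal x n` contributes. -/
lemma fischer_zonal_zonal (hσ : Fintype.card σ = 4) {y : σ → ℝ} (hx : x ⬝ᵥ x = 1)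
    (hy : y ⬝ᵥ y = 1) (n : ℕ) :
    fischer (zonal x n) (zonal y n) = 2 ^ n * n ! * (Chebyshev.U ℝ n).eval (x ⬝ᵥ y) := by
  obtain ⟨h, hzonal⟩ := normSq_dvd_zonal_sub x n
  rw [sub_eq_iff_eq_add.mp hzonal, map_add, LinearMap.add_apply, fischer_normSq_mul,
    laplacian_zonal hσ hy, map_zero, zero_add, map_smul, LinearMap.smul_apply,
    fischer_linearForm_pow x n (isHomogeneous_zonal y n), eval_zonal hx, dotProduct_comm y x,
    smul_eq_mul, mul_assoc]

end Fischer

theorem sum_sum_chebyshevU_inner_nonneg {E ι : Type*} [NormedAddCommGroup E] [InnerProductSpace ℝ E]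
    (hE : Module.finrank ℝ E = 4) (n : ℕ) (s : Finset ι) (c : ι → ℝ) {v : ι → E}
    (hv : ∀ i ∈ s, ‖v i‖ = 1) :
    0 ≤ ∑ i ∈ s, ∑ j ∈ s, c i * c j * (Chebyshev.U ℝ n).eval ⟪v i, v j⟫ := by
  have : FiniteDimensional ℝ E := .of_finrank_pos (by omega)
  let coords (i : ι) : Fin (Module.finrank ℝ E) → ℝ := (stdOrthonormalBasis ℝ E).repr (v i)
  have coords_dot (i j : ι) : coords i ⬝ᵥ coords j = ⟪v i, v j⟫ := by
    rw [← (stdOrthonormalBasis ℝ E).repr.inner_map_map, real_inner_comm]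
    rfl
  have coords_unit (i : ι) (hi : i ∈ s) : coords i ⬝ᵥ coords i = 1 := by
    rw [coords_dot, real_inner_self_eq_norm_sq, hv i hi, one_pow]
  have fischer_nonneg := fischer_self_nonneg (∑ i ∈ s, c i • zonal (coords i) n)
  have expand : fischer (∑ i ∈ s, c i • zonal (coords i) n) (∑ i ∈ s, c i • zonal (coords i) n)
      = 2 ^ n * n ! * ∑ i ∈ s, ∑ j ∈ s, c i * c j * (Chebyshev.U ℝ n).eval ⟪v i, v j⟫ := by
    simp only [map_sum, LinearMap.sum_apply, map_smul, LinearMap.smul_apply, smul_eq_mul,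
      Finset.mul_sum]
    rw [Finset.sum_comm]
    refine Finset.sum_congr rfl fun i hi ↦ Finset.sum_congr rfl fun j hj ↦ ?_
    rw [fischer_zonal_zonal (by simpa using hE) (coords_unit i hi) (coords_unit j hj), coords_dot]
    ring
  exact nonneg_of_mul_nonneg_right (expand ▸ fischer_nonneg) (by positivity)

section Cap

variable {ι E : Type*} [NormedAddCommGroup E] [InnerProductSpace ℝ E] {x : E}

lemma sum_sum_mul_inner_nonneg (s : Finset ι) (c : ι → ℝ) (w : ι → E) :
    0 ≤ ∑ i ∈ s, ∑ j ∈ s, c i * c j * ⟪w i, w j⟫ := by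
  have expand : ⟪∑ i ∈ s, c i • w i, ∑ i ∈ s, c i • w i⟫
      = ∑ i ∈ s, ∑ j ∈ s, c i * c j * ⟪w i, w j⟫ := by
    simp only [sum_inner, inner_sum, real_inner_smul_left, real_inner_smul_right, mul_assoc]
    exact Finset.sum_comm.trans (by simp only [mul_left_comm])
  exact expand ▸ real_inner_self_nonneg

/-- Cauchy–Schwarz for the trace of `T = ∑ i, c i • w i ⊗ w i`. -/
lemma sq_sum_mul_norm_sq_le [FiniteDimensional ℝ E] (s : Finset ι) (c : ι → ℝ) (w : ι → E) :
    (∑ i ∈ s, c i * ‖w i‖ ^ 2) ^ 2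
      ≤ Module.finrank ℝ E * ∑ i ∈ s, ∑ j ∈ s, c i * c j * ⟪w i, w j⟫ ^ 2 := by
  let b := stdOrthonormalBasis ℝ E
  let T a a' := ∑ i ∈ s, c i * (⟪w i, b a⟫ * ⟪w i, b a'⟫)
  have trace_eq : ∑ i ∈ s, c i * ‖w i‖ ^ 2 = ∑ a, T a a := by
    simp only [T, ← b.sum_sq_inner_left, Finset.mul_sum]
    rw [Finset.sum_comm]
    simp only [pow_two]
  have frobenius_eq : ∑ i ∈ s, ∑ j ∈ s, c i * c j * ⟪w i, w j⟫ ^ 2 = ∑ a, ∑ a', T a a' ^ 2 := by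
    have inner_sq (i j : ι) : ⟪w i, w j⟫ ^ 2
        = ∑ a, ∑ a', ⟪w i, b a⟫ * ⟪w i, b a'⟫ * (⟪w j, b a⟫ * ⟪w j, b a'⟫) := by
      rw [← b.sum_inner_mul_inner, pow_two, Finset.sum_mul_sum]
      refine Finset.sum_congr rfl fun a _ ↦ Finset.sum_congr rfl fun a' _ ↦ ?_
      rw [real_inner_comm (w j) (b a), real_inner_comm (w j) (b a')]
      ring
    have T_sq a a' : T a a' ^ 2 = ∑ i ∈ s, ∑ j ∈ s,
        c i * (⟪w i, b a⟫ * ⟪w i, b a'⟫) * (c j * (⟪w j, b a⟫ * ⟪w j, b a'⟫)) := by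
      rw [pow_two, Finset.sum_mul_sum]
    simp only [inner_sq, T_sq, Finset.mul_sum]
    rw [Finset.sum_comm_cycle]
    refine Finset.sum_congr rfl fun a _ ↦ Finset.sum_comm_cycle.trans ?_
    refine Finset.sum_congr rfl fun a' _ ↦ Finset.sum_congr rfl fun i _ ↦
      Finset.sum_congr rfl fun j _ ↦ ?_
    ring
  calc (∑ i ∈ s, c i * ‖w i‖ ^ 2) ^ 2 = (∑ a, T a a) ^ 2 := by rw [trace_eq]
    _ ≤ Module.finrank ℝ E * ∑ a, T a a ^ 2 := by
      simpa using sq_sum_le_card_mul_sum_sq (s := Finset.univ) (f := fun a ↦ T a a)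
    _ ≤ Module.finrank ℝ E * ∑ a, ∑ a', T a a' ^ 2 := by
      gcongr with a
      exact Finset.single_le_sum (f := fun a' ↦ T a a' ^ 2) (fun _ _ ↦ sq_nonneg _)
        (Finset.mem_univ a)
    _ = _ := by rw [frobenius_eq]

lemma inner_sub_inner_smul (hx : ‖x‖ = 1) (y z : E) :
    ⟪y - ⟪x, y⟫ • x, z - ⟪x, z⟫ • x⟫ = ⟪y, z⟫ - ⟪x, y⟫ * ⟪x, z⟫ := by
  simp only [inner_sub_left, inner_sub_right, real_inner_smul_left, real_inner_smul_right,
    real_inner_self_eq_norm_sq, hx, real_inner_comm x y]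
  ring

lemma sum_sum_mul_inner_sub_nonneg (hx : ‖x‖ = 1) (s : Finset ι) (c : ι → ℝ) (y : ι → E) :
    0 ≤ ∑ i ∈ s, ∑ j ∈ s, c i * c j * (⟪y i, y j⟫ - ⟪x, y i⟫ * ⟪x, y j⟫) := by
  simpa only [inner_sub_inner_smul hx] using
    sum_sum_mul_inner_nonneg s c fun i ↦ y i - ⟪x, y i⟫ • x

lemma sq_sum_mul_norm_sq_sub_le {d : ℕ} (hE : Module.finrank ℝ E = d + 1) (hx : ‖x‖ = 1)
    (s : Finset ι) (c : ι → ℝ) (y : ι → E) :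
    (∑ i ∈ s, c i * (‖y i‖ ^ 2 - ⟪x, y i⟫ ^ 2)) ^ 2
      ≤ d * ∑ i ∈ s, ∑ j ∈ s, c i * c j * (⟪y i, y j⟫ - ⟪x, y i⟫ * ⟪x, y j⟫) ^ 2 := by
  have : Fact (Module.finrank ℝ E = d + 1) := ⟨hE⟩
  have : FiniteDimensional ℝ E := .of_finrank_pos (by omega)
  have finrank_eq : Module.finrank ℝ (ℝ ∙ x)ᗮ = d :=
    Submodule.finrank_orthogonal_span_singleton (norm_ne_zero_iff.mp (by simp [hx]))
  let w (i : ι) : (ℝ ∙ x)ᗮ := ⟨y i - ⟪x, y i⟫ • x, by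
    simp [Submodule.mem_orthogonal_singleton_iff_inner_right, inner_sub_right,
      real_inner_smul_right, hx]⟩
  have inner_w (i j : ι) : ⟪w i, w j⟫ = ⟪y i, y j⟫ - ⟪x, y i⟫ * ⟪x, y j⟫ :=
    inner_sub_inner_smul hx (y i) (y j)
  have norm_w (i : ι) : ‖w i‖ ^ 2 = ‖y i‖ ^ 2 - ⟪x, y i⟫ ^ 2 := by
    rw [← real_inner_self_eq_norm_sq, inner_w, real_inner_self_eq_norm_sq, pow_two ⟪x, y i⟫]
  simpa only [inner_w, norm_w, finrank_eq] using sq_sum_mul_norm_sq_le s c w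

lemma sum_sum_le_sum_diag (s : Finset ι) (K : ι → ι → ℝ)
    (hK : ∀ i ∈ s, ∀ j ∈ s, i ≠ j → K i j ≤ 0) :
    ∑ i ∈ s, ∑ j ∈ s, K i j ≤ ∑ i ∈ s, K i i := by
  classical
  refine Finset.sum_le_sum fun i hi ↦ ?_
  rw [← Finset.add_sum_erase s _ hi]
  have offDiag_nonpos := Finset.sum_nonpos fun j hj ↦
    hK i hi j (Finset.mem_of_mem_erase hj) (Finset.ne_of_mem_erase hj).symm
  linarith

/-- The kernels of `p`, `q` and `r` in `hoff` are the zonal kernels of degree `0`, `1` and `2` on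
the components orthogonal to `x`; each of them is positive semidefinite. -/
lemma sq_sum_le_of_offDiag_nonpos {d : ℕ} (hE : Module.finrank ℝ E = d + 1) (hx : ‖x‖ = 1)
    {s : Finset ι} {y : ι → E} (hy : ∀ i ∈ s, ‖y i‖ = 1) (p q r : ι → ℝ) {κ : ℝ} (hκ : 0 ≤ κ)
    (hoff : ∀ i ∈ s, ∀ j ∈ s, i ≠ j →
      p i * p j + q i * q j * (⟪y i, y j⟫ - ⟪x, y i⟫ * ⟪x, y j⟫)
        + κ * (r i * r j * (d * (⟪y i, y j⟫ - ⟪x, y i⟫ * ⟪x, y j⟫) ^ 2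
          - (1 - ⟪x, y i⟫ ^ 2) * (1 - ⟪x, y j⟫ ^ 2))) ≤ 0) :
    (∑ i ∈ s, p i) ^ 2 ≤ ∑ i ∈ s, (p i ^ 2 + q i ^ 2 * (1 - ⟪x, y i⟫ ^ 2)
      + κ * (d - 1) * (r i * (1 - ⟪x, y i⟫ ^ 2)) ^ 2) := by
  have linear_nonneg := sum_sum_mul_inner_sub_nonneg hx s q y
  have quadratic_nonneg : 0 ≤ ∑ i ∈ s, ∑ j ∈ s,
      r i * r j * (d * (⟪y i, y j⟫ - ⟪x, y i⟫ * ⟪x, y j⟫) ^ 2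
        - (1 - ⟪x, y i⟫ ^ 2) * (1 - ⟪x, y j⟫ ^ 2)) := by
    have trace_sq := sq_sum_mul_norm_sq_sub_le hE hx s r y
    rw [Finset.sum_congr rfl fun i hi ↦ by rw [hy i hi, one_pow], pow_two, Finset.sum_mul_sum,
      Finset.mul_sum, ← sub_nonneg, ← Finset.sum_sub_distrib] at trace_sq
    refine trace_sq.trans_eq (Finset.sum_congr rfl fun i _ ↦ ?_)
    rw [Finset.mul_sum, ← Finset.sum_sub_distrib]
    exact Finset.sum_congr rfl fun j _ ↦ by ring
  have diag := sum_sum_le_sum_diag s _ hoff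
  simp only [Finset.sum_add_distrib (s := s), ← Finset.mul_sum s _ κ,
    ← Finset.sum_mul_sum, ← pow_two] at diag
  calc (∑ i ∈ s, p i) ^ 2
    _ ≤ _ := le_of_add_le_of_nonneg_left (le_of_add_le_of_nonneg_left diag
      (mul_nonneg hκ quadratic_nonneg)) linear_nonneg
    _ = _ := by
      rw [Finset.mul_sum, ← Finset.sum_add_distrib, ← Finset.sum_add_distrib]
      refine Finset.sum_congr rfl fun i hi ↦ ?_
      rw [real_inner_self_eq_norm_sq, hy i hi]
      ring

lemma sum_le_of_sq_sum_le {s : Finset ι} {f p D : ι → ℝ} {C : ℝ} (hC : 0 ≤ C)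
    (hp : (∑ i ∈ s, p i) ^ 2 ≤ ∑ i ∈ s, D i) (hf : ∀ i ∈ s, f i ≤ C * (2 * p i - D i)) :
    ∑ i ∈ s, f i ≤ C :=
  calc ∑ i ∈ s, f i ≤ ∑ i ∈ s, C * (2 * p i - D i) := Finset.sum_le_sum hf
    _ = C * (2 * ∑ i ∈ s, p i - ∑ i ∈ s, D i) := by
      rw [← Finset.mul_sum, Finset.sum_sub_distrib, Finset.mul_sum]
    _ ≤ C * 1 := by
      gcongr
      linarith [sq_nonneg (1 - ∑ i ∈ s, p i)]
    _ = C := mul_one C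

lemma sq_inner_add_inner_le (hx : ‖x‖ = 1) {y z : E} (hy : ‖y‖ = 1) (hz : ‖z‖ = 1) :
    (⟪x, y⟫ + ⟪x, z⟫) ^ 2 ≤ 2 + 2 * ⟪y, z⟫ :=
  calc (⟪x, y⟫ + ⟪x, z⟫) ^ 2 = ⟪x, y + z⟫ ^ 2 := by rw [inner_add_right]
    _ ≤ (‖x‖ * ‖y + z‖) ^ 2 :=
      sq_le_sq' (neg_le_of_abs_le (abs_real_inner_le_norm _ _)) (real_inner_le_norm _ _)
    _ = 2 + 2 * ⟪y, z⟫ := by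
      rw [hx, one_mul, norm_add_sq_real, hy, hz]
      ring

lemma inner_le_half_of_one_le_dist {y z : E} (hy : ‖y‖ = 1) (hz : ‖z‖ = 1) (h : 1 ≤ dist y z) :
    ⟪y, z⟫ ≤ 1 / 2 := by
  have expand := norm_sub_sq_real y z
  rw [← dist_eq_norm, hy, hz] at expand
  nlinarith

end Cap

section Certificate

/-- The test function of the linear programming bound, a nonnegative combination of Chebyshev
polynomials. The coefficients are a rounded numerical optimum, chosen so that `1 / 2` is a root. -/
noncomputable def testFn (t : ℝ) : ℝ :=
  200 + 188 * (Chebyshev.U ℝ 1).eval t + 405 * (Chebyshev.U ℝ 2).eval t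
    + 166 * (Chebyshev.U ℝ 3).eval t + 202 * (Chebyshev.U ℝ 4).eval t
    + 20 * (Chebyshev.U ℝ 9).eval t

/-- The binary form of degree `9` that specializes to `testFn` at `s = 1`. -/
noncomputable def testForm (t s : ℝ) : ℝ :=
  10240 * t ^ 9 - 20480 * t ^ 7 * s ^ 2 + 13440 * t ^ 5 * s ^ 4 + 3232 * t ^ 4 * s ^ 5
    - 1872 * t ^ 3 * s ^ 6 - 804 * t ^ 2 * s ^ 7 - 88 * t * s ^ 8 - 3 * s ^ 9

lemma testFn_eq_testForm (t : ℝ) : testFn t = testForm t 1 := by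
  have recurrence (n : ℤ) : (Chebyshev.U ℝ (n + 2)).eval t
      = 2 * t * (Chebyshev.U ℝ (n + 1)).eval t - (Chebyshev.U ℝ n).eval t := by
    simp [Polynomial.Chebyshev.U_add_two]
  have U₀ : (Chebyshev.U ℝ 0).eval t = 1 := by simp
  have U₁ : (Chebyshev.U ℝ 1).eval t = 2 * t := by simp
  have U₂ := recurrence 0
  have U₃ := recurrence 1
  have U₄ := recurrence 2
  have U₅ := recurrence 3
  have U₆ := recurrence 4
  have U₇ := recurrence 5
  have U₈ := recurrence 6
  have U₉ := recurrence 7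
  norm_num only at U₂ U₃ U₄ U₅ U₆ U₇ U₈ U₉
  rw [testFn, testForm, U₉, U₈, U₇, U₆, U₅, U₄, U₃, U₂, U₁, U₀]
  ring

lemma testFn_one : testFn 1 = 3665 := by
  rw [testFn_eq_testForm, testForm]
  norm_num

/-- With `t = x * a + y * b` and `1 = x + y`, a polynomial in `t` becomes a form in `x` and `y`
whose coefficients are its Bernstein coefficients on `[a, b]`, up to binomial factors. -/
lemma nonneg_of_bernstein {F : ℝ → ℝ → ℝ} {a b t : ℝ}
    (hF : ∀ x y, 0 ≤ x → 0 ≤ y → 0 ≤ F (x * a + y * b) (x + y)) (hat : a ≤ t) (htb : t ≤ b) :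
    0 ≤ F t 1 := by
  obtain ⟨x, y, hx, hy, hxy, rfl⟩ := (Convex.mem_Icc (hat.trans htb)).mp ⟨hat, htb⟩
  simpa only [hxy] using hF x y hx hy

lemma testFn_nonpos {t : ℝ} (ht : -27 / 50 ≤ t) (ht' : t ≤ 1 / 2) : testFn t ≤ 0 := by
  suffices h : 0 ≤ -testForm t 1 by
    rwa [testFn_eq_testForm, ← neg_nonneg]
  rcases le_total t (-33 / 100) with h₁ | h₁
  · refine nonneg_of_bernstein (F := fun t s ↦ -testForm t s) (fun x y hx hy ↦ ?_) ht h₁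
    simp only [testForm]
    ring_nf
    positivity
  rcases le_total t (-2 / 25) with h₂ | h₂
  · refine nonneg_of_bernstein (F := fun t s ↦ -testForm t s) (fun x y hx hy ↦ ?_) h₁ h₂
    simp only [testForm]
    ring_nf
    positivity
  · refine nonneg_of_bernstein (F := fun t s ↦ -testForm t s) (fun x y hx hy ↦ ?_) h₂ ht'
    simp only [testForm]
    ring_nf
    positivity

/-- The factor common to the weights of the degree `0`, `1` and `2` kernels at a point `y` of the
cap with `⟪x, y⟫ = t`. -/
noncomputable def capScale (t : ℝ) : ℝ := (9 * t + 7 / 2) * (t + 27 / 50)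

/-- The weight of the degree `1` kernel, up to the factor `capScale`. -/
noncomputable def linearWeight (t : ℝ) : ℝ := (73 + 7 * t) / 100

lemma capScale_nonneg {t : ℝ} (ht : t ≤ -27 / 50) : 0 ≤ capScale t :=
  mul_nonneg_of_nonpos_of_nonpos (by linarith) (by linarith)

lemma testFn_le_of_mem_cap {t : ℝ} (ht : -1 ≤ t) (ht' : t ≤ -27 / 50) :
    testFn t ≤ 1334 * (2 * (capScale t * (-27 / 50 - t))
      - capScale t ^ 2 * ((-27 / 50 - t) ^ 2 + linearWeight t ^ 2 * (1 - t ^ 2)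
        + 3 * ((1 + t) * (1 - t ^ 2)) ^ 2)) := by
  let A (t s : ℝ) : ℝ := (9 * t + 7 / 2 * s) * (t + 27 / 50 * s)
  let F (t s : ℝ) : ℝ := 1334 * (2 * (A t s * (-27 / 50 * s - t)) * s ^ 7
      - A t s ^ 2 * ((-27 / 50 * s - t) ^ 2 * s ^ 4
        + ((73 * s + 7 * t) / 100) ^ 2 * (s ^ 2 - t ^ 2) * s ^ 2
        + 3 * ((s + t) * (s ^ 2 - t ^ 2)) ^ 2))
    - s * testForm t s
  suffices h : 0 ≤ F t 1 by
    rw [testFn_eq_testForm, ← sub_nonneg]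
    simpa [F, A, capScale, linearWeight] using h
  rcases le_total t (-89 / 100) with h₁ | h₁
  · refine nonneg_of_bernstein (fun x y hx hy ↦ ?_) ht h₁
    simp only [F, A, testForm]
    ring_nf
    positivity
  rcases le_total t (-14 / 25) with h₂ | h₂
  · refine nonneg_of_bernstein (fun x y hx hy ↦ ?_) h₁ h₂
    simp only [F, A, testForm]
    ring_nf
    positivity
  · refine nonneg_of_bernstein (fun x y hx hy ↦ ?_) h₂ ht'
    simp only [F, A, testForm]
    ring_nf
    positivity

lemma extremal_offDiag_nonpos {t v : ℝ} (ht : -1 ≤ t) (ht' : t ≤ -27 / 50) (hv : -1 ≤ v)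
    (hv' : v ≤ -27 / 50) :
    (-27 / 50 - t) * (-27 / 50 - v) + linearWeight t * linearWeight v * (1 / 2 - t * v)
      + 3 / 2 * ((1 + t) * (1 + v) * (3 * (1 / 2 - t * v) ^ 2 - (1 - t ^ 2) * (1 - v ^ 2)))
      ≤ 0 := by
  -- The last factor `s ^ 2 * r ^ 2` raises the degree; without it some coefficients are negative.
  let F (t s v r : ℝ) : ℝ := -((-27 / 50 * s - t) * (-27 / 50 * r - v) * s ^ 2 * r ^ 2
    + (73 * s + 7 * t) / 100 * ((73 * r + 7 * v) / 100) * (s * r / 2 - t * v) * s * r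
    + 3 / 2 * ((s + t) * (r + v)
      * (3 * (s * r / 2 - t * v) ^ 2 - (s ^ 2 - t ^ 2) * (r ^ 2 - v ^ 2)))) * s ^ 2 * r ^ 2
  suffices h : 0 ≤ F t 1 v 1 by
    simp only [F] at h
    simp only [linearWeight]
    linear_combination h
  have F_nonneg_of_box {a b c d : ℝ} (hF : ∀ x y z w, 0 ≤ x → 0 ≤ y → 0 ≤ z → 0 ≤ w →
      0 ≤ F (x * a + y * b) (x + y) (z * c + w * d) (z + w)) (hat : a ≤ t) (htb : t ≤ b)
      (hcv : c ≤ v) (hvd : v ≤ d) : 0 ≤ F t 1 v 1 :=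
    nonneg_of_bernstein (F := fun t s ↦ F t s v 1) (fun x y hx hy ↦
      nonneg_of_bernstein (fun z w hz hw ↦ hF x y z w hx hy hz hw) hcv hvd) hat htb
  rcases le_total t (-4 / 5) with h₁ | h₁ <;> rcases le_total v (-4 / 5) with h₂ | h₂
  · refine F_nonneg_of_box (fun x y z w hx hy hz hw ↦ ?_) ht h₁ hv h₂
    simp only [F]
    ring_nf
    positivity
  · refine F_nonneg_of_box (fun x y z w hx hy hz hw ↦ ?_) ht h₁ h₂ hv'
    simp only [F]
    ring_nf
    positivity
  · refine F_nonneg_of_box (fun x y z w hx hy hz hw ↦ ?_) h₁ ht' hv h₂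
    simp only [F]
    ring_nf
    positivity
  · refine F_nonneg_of_box (fun x y z w hx hy hz hw ↦ ?_) h₁ ht' h₂ hv'
    simp only [F]
    ring_nf
    positivity

/-- The left-hand side increases with `u`, so `u = 1 / 2` is the extremal case. -/
lemma offDiag_nonpos {t v u : ℝ} (ht : -1 ≤ t) (ht' : t ≤ -27 / 50) (hv : -1 ≤ v)
    (hv' : v ≤ -27 / 50) (hu : (t + v) ^ 2 ≤ 2 + 2 * u) (hu' : u ≤ 1 / 2) :
    (-27 / 50 - t) * (-27 / 50 - v) + linearWeight t * linearWeight v * (u - t * v)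
      + 3 / 2 * ((1 + t) * (1 + v) * (3 * (u - t * v) ^ 2 - (1 - t ^ 2) * (1 - v ^ 2))) ≤ 0 := by
  have dominates {t : ℝ} (ht : t ≤ -27 / 50) : 3 / 2 * (1 + t) ≤ linearWeight t := by
    rw [linearWeight]
    linarith
  have weights : 9 / 4 * ((1 + t) * (1 + v)) ≤ linearWeight t * linearWeight v :=
    calc 9 / 4 * ((1 + t) * (1 + v)) = 3 / 2 * (1 + t) * (3 / 2 * (1 + v)) := by ring
      _ ≤ linearWeight t * linearWeight v :=
        mul_le_mul (dominates ht') (dominates hv') (by linarith) (by linarith [dominates ht'])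
  have slope_nonneg : 0 ≤ linearWeight t * linearWeight v
      + 9 / 2 * ((1 + t) * (1 + v)) * (u + 1 / 2 - 2 * (t * v)) := by
    have neg_half_le : -1 / 2 ≤ u + 1 / 2 - 2 * (t * v) := by nlinarith [sq_nonneg (t - v)]
    have factors_nonneg : 0 ≤ (1 + t) * (1 + v) := mul_nonneg (by linarith) (by linarith)
    nlinarith
  have increment := mul_nonneg (sub_nonneg.mpr hu') slope_nonneg
  linear_combination extremal_offDiag_nonpos ht ht' hv hv' + increment

end Certificate

section Bounds

variable {E : Type*} [NormedAddCommGroup E] [InnerProductSpace ℝ E] {S : Finset E} {x : E}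

lemma sum_testFn_inner_le_of_subset_cap (hE : Module.finrank ℝ E = 4) (hx : ‖x‖ = 1)
    (hnorm : ∀ y ∈ S, ‖y‖ = 1) (hinner : ∀ y ∈ S, ∀ z ∈ S, y ≠ z → ⟪y, z⟫ ≤ 1 / 2)
    (hcap : ∀ y ∈ S, ⟪x, y⟫ ≤ -27 / 50) :
    ∑ y ∈ S, testFn ⟪x, y⟫ ≤ 1334 := by
  have neg_one_le (y : E) (hy : y ∈ S) : -1 ≤ ⟪x, y⟫ := by
    simpa [hx, hnorm y hy] using neg_le_of_abs_le (abs_real_inner_le_norm x y)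
  refine sum_le_of_sq_sum_le (by norm_num) (sq_sum_le_of_offDiag_nonpos hE hx hnorm
    (fun y ↦ capScale ⟪x, y⟫ * (-27 / 50 - ⟪x, y⟫))
    (fun y ↦ capScale ⟪x, y⟫ * linearWeight ⟪x, y⟫)
    (fun y ↦ capScale ⟪x, y⟫ * (1 + ⟪x, y⟫)) (κ := 3 / 2) (by norm_num) ?_) ?_
  · intro y hy z hz hyz
    have scale_nonneg := mul_nonneg (capScale_nonneg (hcap y hy)) (capScale_nonneg (hcap z hz))
    have unscaled := offDiag_nonpos (neg_one_le y hy) (hcap y hy) (neg_one_le z hz) (hcap z hz)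
      (sq_inner_add_inner_le hx (hnorm y hy) (hnorm z hz)) (hinner y hy z hz hyz)
    push_cast
    linear_combination mul_nonpos_of_nonneg_of_nonpos scale_nonneg unscaled
  · intro y hy
    convert testFn_le_of_mem_cap (neg_one_le y hy) (hcap y hy) using 2
    push_cast
    ring

lemma sum_testFn_inner_le (hE : Module.finrank ℝ E = 4) (hnorm : ∀ y ∈ S, ‖y‖ = 1)
    (hinner : ∀ y ∈ S, ∀ z ∈ S, y ≠ z → ⟪y, z⟫ ≤ 1 / 2) (hx : x ∈ S) :
    ∑ y ∈ S, testFn ⟪x, y⟫ ≤ 4999 := by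
  classical
  have self_term : testFn ⟪x, x⟫ = 3665 := by
    rw [real_inner_self_eq_norm_sq, hnorm x hx, one_pow, testFn_one]
  have cap_terms : ∑ y ∈ S.erase x with ⟪x, y⟫ ≤ -27 / 50, testFn ⟪x, y⟫ ≤ 1334 := by
    have mem_of_mem {y : E} (hy : y ∈ {y ∈ S.erase x | ⟪x, y⟫ ≤ -27 / 50}) : y ∈ S :=
      Finset.mem_of_mem_erase (Finset.mem_of_mem_filter y hy)
    exact sum_testFn_inner_le_of_subset_cap hE (hnorm x hx) (fun y hy ↦ hnorm y (mem_of_mem hy))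
      (fun y hy z hz ↦ hinner y (mem_of_mem hy) z (mem_of_mem hz))
      fun y hy ↦ (Finset.mem_filter.mp hy).2
  have other_terms : ∑ y ∈ S.erase x with ¬⟪x, y⟫ ≤ -27 / 50, testFn ⟪x, y⟫ ≤ 0 := by
    refine Finset.sum_nonpos fun y hy ↦ ?_
    obtain ⟨hyx, hcap⟩ := Finset.mem_filter.mp hy
    exact testFn_nonpos (le_of_not_ge hcap)
      (hinner x hx y (Finset.mem_of_mem_erase hyx) (Finset.ne_of_mem_erase hyx).symm)
  rw [← Finset.add_sum_erase S _ hx, ← Finset.sum_filter_add_sum_filter_not (S.erase x)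
    (fun y ↦ ⟪x, y⟫ ≤ -27 / 50)]
  linarith

lemma card_sq_le_sum_sum_testFn_inner (hE : Module.finrank ℝ E = 4) (hnorm : ∀ y ∈ S, ‖y‖ = 1) :
    200 * (S.card : ℝ) ^ 2 ≤ ∑ x ∈ S, ∑ y ∈ S, testFn ⟪x, y⟫ := by
  have U_nonneg (n : ℕ) : 0 ≤ ∑ x ∈ S, ∑ y ∈ S, (Chebyshev.U ℝ n).eval ⟪x, y⟫ := by
    simpa using sum_sum_chebyshevU_inner_nonneg hE n S 1 hnorm
  have U₁ := U_nonneg 1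
  have U₂ := U_nonneg 2
  have U₃ := U_nonneg 3
  have U₄ := U_nonneg 4
  have U₉ := U_nonneg 9
  push_cast at U₁ U₂ U₃ U₄ U₉
  simp only [testFn, Finset.sum_add_distrib, ← Finset.mul_sum, Finset.sum_const, nsmul_eq_mul]
  linarith

end Bounds

end KissingNumber

open KissingNumber in
theorem kissing_number_dim4_le_24_general {E : Type*} [NormedAddCommGroup E]
    [InnerProductSpace ℝ E] (hE : Module.finrank ℝ E = 4) (S : Finset E)
    (hnorm : ∀ x ∈ S, ‖x‖ = 1) (hdist : ∀ x ∈ S, ∀ y ∈ S, x ≠ y → 1 ≤ dist x y) :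
    S.card ≤ 24 := by
  have hinner : ∀ x ∈ S, ∀ y ∈ S, x ≠ y → ⟪x, y⟫ ≤ 1 / 2 := fun x hx y hy hxy ↦
    inner_le_half_of_one_le_dist (hnorm x hx) (hnorm y hy) (hdist x hx y hy hxy)
  have card_bound : 200 * (S.card : ℝ) ^ 2 ≤ 4999 * S.card :=
    calc 200 * (S.card : ℝ) ^ 2 ≤ ∑ x ∈ S, ∑ y ∈ S, testFn ⟪x, y⟫ :=
          card_sq_le_sum_sum_testFn_inner hE hnorm
      _ ≤ ∑ x ∈ S, 4999 := Finset.sum_le_sum fun x hx ↦ sum_testFn_inner_le hE hnorm hinner hx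
      _ = 4999 * S.card := by rw [Finset.sum_const, nsmul_eq_mul, mul_comm]
  by_contra! hcard
  have : (25 : ℝ) ≤ S.card := by exact_mod_cast hcard
  nlinarith

theorem kissing_number_dim4_le_24
    (S : Finset (EuclideanSpace ℝ (Fin 4)))
    (hnorm : ∀ x ∈ S, ‖x‖ = 1)
    (hdist : ∀ x ∈ S, ∀ y ∈ S, x ≠ y → 1 ≤ dist x y) :
    S.card ≤ 24 :=
  kissing_number_dim4_le_24_general finrank_euclideanSpace_fin S hnorm hdist
end

section
/- In dimension 6, every finite set S of points on the unit sphere of EuclideanSpace ℝ (Fin 6) (i.e., ‖x‖ = 1 for all x ∈ S) such that any two distinct points of S are at Euclidean distance at least 1 has cardinality at most 78; that is, the kissing number in dimension 6 is at most 78. -/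
/-!
The proof is a Bachoc–Vallentin three-point semidefinite programming bound, applied to exclude
configurations of 79 points.

Fix a point `x` of the configuration. After projection to the orthogonal complement of `x`, the
Gegenbauer polynomials of one dimension less are positive definite kernels, because they are
reproducing kernels for harmonic forms under the Fischer inner product. They yield polynomials `K`
in the three inner products of a triple with `∑ y, ∑ z, K(x, y, z) ≥ 0`. Summed over `x`, with the
degenerate triples spread over the others, this gives a polynomial with nonnegative sum over the
triples of distinct points. An explicit certificate exhibits such a polynomial that equals, after
symmetrization, the negative of a sum of squares with multipliers nonnegative on `[-1, 1/2]`, a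
positive constant and a remainder smaller than that constant, whence a contradiction.

The polynomial identity behind the certificate is checked by Kronecker substitution: an integer
polynomial of degree at most `D` in each variable with coefficients below `B` in absolute value
vanishes if its value at `(B, B ^ (D + 1), B ^ (D + 1) ^ 2, …)` does.
-/

/-- Integer polynomials in variables indexed by `σ`, kept as expression trees so that values, degree
bounds and coefficient bounds can be computed by kernel reduction. -/
inductive PolyExpr (σ : Type*)
  | const (z : ℤ) : PolyExpr σ
  | var (i : σ) : PolyExpr σ
  | add (p q : PolyExpr σ) : PolyExpr σ
  | mul (p q : PolyExpr σ) : PolyExpr σ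

namespace PolyExpr

variable {σ τ : Type*}

instance : Zero (PolyExpr σ) := ⟨const 0⟩
instance : One (PolyExpr σ) := ⟨const 1⟩
instance : Add (PolyExpr σ) := ⟨add⟩
instance : Mul (PolyExpr σ) := ⟨mul⟩
instance : Sub (PolyExpr σ) := ⟨fun p q => p + const (-1) * q⟩
instance : Pow (PolyExpr σ) ℕ := ⟨fun p n => n.rec 1 fun _ r => p * r⟩

/-- The value of a polynomial expression at a point of a commutative ring. -/
def eval {A : Type*} [CommRing A] (x : σ → A) : PolyExpr σ → A
  | const z => z
  | var i => x i
  | add p q => eval x p + eval x q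
  | mul p q => eval x p * eval x q

/-- The value at `(1, …, 1)` after all constants are replaced by their absolute values, an upper
bound for the sum of the absolute values of the coefficients. -/
def l1Bound : PolyExpr σ → ℕ
  | const z => z.natAbs
  | var _ => 1
  | add p q => l1Bound p + l1Bound q
  | mul p q => l1Bound p * l1Bound q

/-- An upper bound for the total degree, read off the expression. -/
def degBound : PolyExpr σ → ℕ
  | const _ => 0
  | var _ => 1
  | add p q => max (degBound p) (degBound q)
  | mul p q => degBound p + degBound q

/-- Substitution of polynomial expressions for the variables. -/
def subst (s : σ → PolyExpr τ) : PolyExpr σ → PolyExpr τ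
  | const z => const z
  | var i => s i
  | add p q => add (subst s p) (subst s q)
  | mul p q => mul (subst s p) (subst s q)

/-- Renaming of the variables. -/
def rename (f : σ → τ) (e : PolyExpr σ) : PolyExpr τ := e.subst fun i => var (f i)

section Eval

variable {A : Type*} [CommRing A] (x : σ → A)

@[simp] theorem eval_const (z : ℤ) : eval x (const z) = z := rfl
@[simp] theorem eval_var (i : σ) : eval x (var i) = x i := rfl
@[simp] theorem eval_zero : eval x 0 = 0 := Int.cast_zero
@[simp] theorem eval_one : eval x 1 = 1 := Int.cast_one
@[simp] theorem eval_add (p q : PolyExpr σ) : eval x (p + q) = eval x p + eval x q := rfl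
@[simp] theorem eval_mul (p q : PolyExpr σ) : eval x (p * q) = eval x p * eval x q := rfl

@[simp] theorem eval_sub (p q : PolyExpr σ) : eval x (p - q) = eval x p - eval x q := by
  change eval x p + ((-1 : ℤ) : A) * eval x q = _
  push_cast
  ring

@[simp] theorem eval_pow (p : PolyExpr σ) (n : ℕ) : eval x (p ^ n) = eval x p ^ n := by
  induction n with
  | zero => rw [pow_zero]; exact eval_one x
  | succ n ih => rw [pow_succ', ← ih]; rfl

@[simp] theorem eval_list_sum (l : List (PolyExpr σ)) : eval x l.sum = (l.map (eval x)).sum := by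
  induction l with
  | nil => simp
  | cons p l ih => simp [ih]

@[simp] theorem eval_subst (y : τ → A) (s : σ → PolyExpr τ) (e : PolyExpr σ) :
    eval y (e.subst s) = eval (fun i => eval y (s i)) e := by
  induction e with
  | const | var => rfl
  | add p q hp hq => simp only [subst, eval, hp, hq]
  | mul p q hp hq => simp only [subst, eval, hp, hq]

@[simp] theorem eval_rename (y : τ → A) (f : σ → τ) (e : PolyExpr σ) :
    eval y (e.rename f) = eval (y ∘ f) e :=
  eval_subst y _ e

theorem map_eval {B : Type*} [CommRing B] (f : A →+* B) (e : PolyExpr σ) :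
    f (eval x e) = eval (fun i => f (x i)) e := by
  induction e with
  | const z => exact map_intCast f z
  | var => rfl
  | add p q hp hq => simp only [eval, map_add, hp, hq]
  | mul p q hp hq => simp only [eval, map_mul, hp, hq]

end Eval

@[simp] theorem l1Bound_add (p q : PolyExpr σ) : l1Bound (p + q) = l1Bound p + l1Bound q := rfl

@[simp] theorem degBound_add (p q : PolyExpr σ) :
    degBound (p + q) = max (degBound p) (degBound q) := rfl

@[simp] theorem l1Bound_rename (f : σ → τ) (e : PolyExpr σ) : (e.rename f).l1Bound = e.l1Bound := by
  induction e with
  | const | var => rfl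
  | add p q hp hq => exact congrArg₂ (· + ·) hp hq
  | mul p q hp hq => exact congrArg₂ (· * ·) hp hq

@[simp] theorem degBound_rename (f : σ → τ) (e : PolyExpr σ) :
    (e.rename f).degBound = e.degBound := by
  induction e with
  | const | var => rfl
  | add p q hp hq => exact congrArg₂ max hp hq
  | mul p q hp hq => exact congrArg₂ (· + ·) hp hq

theorem abs_eval_le_l1Bound {x : σ → ℝ} (hx : ∀ i, |x i| ≤ 1) (e : PolyExpr σ) :
    |eval x e| ≤ l1Bound e := by
  induction e with
  | const z => simp [eval, l1Bound, Nat.cast_natAbs]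
  | var i => simpa [eval, l1Bound] using hx i
  | add p q hp hq =>
    rw [l1Bound, Nat.cast_add]
    exact (abs_add_le _ _).trans (add_le_add hp hq)
  | mul p q hp hq =>
    rw [eval, l1Bound, abs_mul, Nat.cast_mul]
    gcongr

open MvPolynomial

theorem totalDegree_eval_X_le (e : PolyExpr σ) :
    (eval X e : MvPolynomial σ ℤ).totalDegree ≤ degBound e := by
  induction e with
  | const z =>
    rw [eval_const, ← map_intCast (C : ℤ →+* MvPolynomial σ ℤ), totalDegree_C]
    exact Nat.zero_le _
  | var i => exact (totalDegree_X i).le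
  | add p q hp hq => exact (totalDegree_add _ _).trans (max_le_max hp hq)
  | mul p q hp hq => exact (totalDegree_mul _ _).trans (add_le_add hp hq)

/-- A polynomial with nonnegative coefficients that dominates `e` coefficientwise. -/
noncomputable def majorant : PolyExpr σ → MvPolynomial σ ℕ
  | const z => C z.natAbs
  | var i => X i
  | add p q => majorant p + majorant q
  | mul p q => majorant p * majorant q

theorem eval_one_majorant (e : PolyExpr σ) :
    MvPolynomial.eval (fun _ => 1) (majorant e) = l1Bound e := by
  induction e with
  | const | var => simp [majorant, l1Bound]
  | add p q hp hq => simp only [majorant, l1Bound, map_add, hp, hq]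
  | mul p q hp hq => simp only [majorant, l1Bound, map_mul, hp, hq]

theorem natAbs_coeff_eval_X_le (e : PolyExpr σ) (m : σ →₀ ℕ) :
    (coeff m (eval X e : MvPolynomial σ ℤ)).natAbs ≤ coeff m (majorant e) := by
  classical
  induction e generalizing m with
  | const z =>
    rw [eval_const, ← map_intCast (C : ℤ →+* MvPolynomial σ ℤ), majorant, coeff_C, coeff_C]
    split_ifs <;> simp
  | var i =>
    rw [eval_var, majorant, coeff_X, coeff_X]
    split_ifs <;> simp
  | add p q hp hq =>
    rw [eval, majorant, coeff_add, coeff_add]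
    exact (Int.natAbs_add_le _ _).trans (add_le_add (hp m) (hq m))
  | mul p q hp hq =>
    rw [eval, majorant, coeff_mul, coeff_mul]
    refine (Int.natAbs_sum_le _ _).trans (Finset.sum_le_sum fun a _ => ?_)
    rw [Int.natAbs_mul]
    exact Nat.mul_le_mul (hp _) (hq _)

theorem coeff_le_eval_one (P : MvPolynomial σ ℕ) (m : σ →₀ ℕ) :
    coeff m P ≤ MvPolynomial.eval (fun _ => 1) P := by
  by_cases hm : m ∈ P.support
  · simpa [MvPolynomial.eval_eq] using
      Finset.single_le_sum (f := fun d => coeff d P) (fun _ _ => Nat.zero_le _) hm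
  · simp [notMem_support_iff.mp hm]

theorem abs_coeff_eval_X_le_l1Bound (e : PolyExpr σ) (m : σ →₀ ℕ) :
    |coeff m (eval X e : MvPolynomial σ ℤ)| ≤ l1Bound e := by
  rw [Int.abs_eq_natAbs, ← eval_one_majorant]
  exact_mod_cast (natAbs_coeff_eval_X_le e m).trans (coeff_le_eval_one _ m)

end PolyExpr

section Kronecker

theorem eq_zero_of_sum_mul_pow_eq_zero {ι : Type*} {s : Finset ι} {c : ι → ℤ} {e : ι → ℕ} {B : ℤ}
    (he : Set.InjOn e s) (hc : ∀ i ∈ s, |c i| < B) (hsum : ∑ i ∈ s, c i * B ^ e i = 0) :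
    ∀ i ∈ s, c i = 0 := by
  classical
  by_contra! hne
  obtain ⟨i₀, hi₀, hci₀⟩ := hne
  obtain ⟨i, hi, hmin⟩ := Finset.exists_min_image {i ∈ s | c i ≠ 0} e
    ⟨i₀, Finset.mem_filter.mpr ⟨hi₀, hci₀⟩⟩
  obtain ⟨his, hci⟩ := Finset.mem_filter.mp hi
  have hB : 0 < B := (abs_nonneg _).trans_lt (hc i his)
  have htail : B ^ (e i + 1) ∣ ∑ j ∈ s.erase i, c j * B ^ e j := by
    refine Finset.dvd_sum fun j hj => ?_
    obtain ⟨hji, hjs⟩ := Finset.mem_erase.mp hj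
    rcases eq_or_ne (c j) 0 with hcj | hcj
    · simp [hcj]
    · have hle := hmin j (Finset.mem_filter.mpr ⟨hjs, hcj⟩)
      have hne : e i ≠ e j := fun h => hji (he hjs his h.symm)
      exact (pow_dvd_pow B (by omega)).mul_left _
  have hdvd : B ^ (e i + 1) ∣ c i * B ^ e i := by
    rw [← Finset.add_sum_erase s _ his] at hsum
    rwa [eq_neg_of_add_eq_zero_left hsum, dvd_neg]
  rw [pow_succ', mul_dvd_mul_iff_right (by positivity)] at hdvd
  exact hci (Int.eq_zero_of_abs_lt_dvd hdvd (hc i his))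

theorem injOn_sum_mul_pow (n D : ℕ) :
    Set.InjOn (fun m : Fin n →₀ ℕ => ∑ i, m i * (D + 1) ^ (i : ℕ)) {m | ∀ i, m i ≤ D} := by
  intro m hm m' hm' h
  let digits (m : Fin n →₀ ℕ) (hm : ∀ i, m i ≤ D) (i : Fin n) : Fin (D + 1) :=
    ⟨m i, Nat.lt_succ_of_le (hm i)⟩
  have hdigits : digits m hm = digits m' hm' :=
    finFunctionFinEquiv.injective <| Fin.ext <| by simpa [finFunctionFinEquiv_apply] using h
  exact Finsupp.ext fun i => congrArg Fin.val (congrFun hdigits i)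

open MvPolynomial

theorem eq_zero_of_eval_kronecker_eq_zero {n D : ℕ} {B : ℤ} {P : MvPolynomial (Fin n) ℤ}
    (hdeg : P.totalDegree ≤ D) (hcoeff : ∀ m, |coeff m P| < B)
    (heval : eval (fun i : Fin n => B ^ (D + 1) ^ (i : ℕ)) P = 0) : P = 0 := by
  have hexp : ∀ m ∈ P.support, ∀ i, m i ≤ D := fun m hm i =>
    ((le_degreeOf_of_mem_support i hm).trans (degreeOf_le_totalDegree _ _)).trans hdeg
  have hsum : ∑ m ∈ P.support, coeff m P * B ^ ∑ i, m i * (D + 1) ^ (i : ℕ) = 0 := by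
    simpa only [eval_eq', ← pow_mul', Finset.prod_pow_eq_pow_sum] using heval
  ext m
  by_cases hm : m ∈ P.support
  · exact eq_zero_of_sum_mul_pow_eq_zero ((injOn_sum_mul_pow n D).mono hexp)
      (fun m _ => hcoeff m) hsum m hm
  · exact notMem_support_iff.mp hm

theorem PolyExpr.eval_eq_zero_of_eval_kronecker_eq_zero {n D B : ℕ} {e : PolyExpr (Fin n)}
    (hdeg : e.degBound ≤ D) (hl1 : e.l1Bound < B)
    (heval : e.eval (fun i : Fin n => ((B ^ (D + 1) ^ (i : ℕ) : ℕ) : ℤ)) = 0)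
    {A : Type*} [CommRing A] (x : Fin n → A) : e.eval x = 0 := by
  have hzero : (e.eval X : MvPolynomial (Fin n) ℤ) = 0 := by
    refine eq_zero_of_eval_kronecker_eq_zero (D := D) (B := B)
      (e.totalDegree_eval_X_le.trans hdeg) (fun m => ?_) ?_
    · exact (e.abs_coeff_eval_X_le_l1Bound m).trans_lt (by exact_mod_cast hl1)
    · simpa [PolyExpr.map_eval] using heval
  simpa [PolyExpr.map_eval] using congrArg (eval₂Hom (Int.castRingHom A) x) hzero

end Kronecker
section Laplacian

open MvPolynomial

variable {ι R : Type*} [Fintype ι] [CommRing R]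

/-- The Laplace operator `∑ i, ∂ᵢ²` on polynomials. -/
noncomputable def laplacian : MvPolynomial ι R →ₗ[R] MvPolynomial ι R :=
  ∑ i, (pderiv i).toLinearMap ∘ₗ (pderiv i).toLinearMap

/-- The linear form `y ↦ x ⬝ y` as a polynomial in `y`. -/
noncomputable def linForm (x : ι → R) : MvPolynomial ι R := ∑ i, C (x i) * X i

variable (ι R) in
/-- The quadratic form `y ↦ y ⬝ y` as a polynomial in `y`. -/
noncomputable def normSqForm : MvPolynomial ι R := ∑ i, X i * X i

theorem laplacian_apply (p : MvPolynomial ι R) : laplacian p = ∑ i, pderiv i (pderiv i p) := by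
  simp [laplacian]

theorem laplacian_mul (p q : MvPolynomial ι R) :
    laplacian (p * q) =
      laplacian p * q + 2 * ∑ i, pderiv i p * pderiv i q + p * laplacian q := by
  simp only [laplacian_apply, pderiv_mul, map_add, Finset.sum_mul, Finset.mul_sum,
    ← Finset.sum_add_distrib]
  exact Finset.sum_congr rfl fun i _ => by ring

theorem pderiv_linForm (x : ι → R) (i : ι) : pderiv i (linForm x) = C (x i) := by
  classical
  simp [linForm, map_sum, pderiv_X, Pi.single_apply]

theorem pderiv_normSqForm (i : ι) : pderiv i (normSqForm ι R) = 2 * X i := by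
  classical
  simp [normSqForm, map_sum, pderiv_X, Pi.single_apply, Finset.sum_add_distrib, two_mul]

theorem isHomogeneous_linForm (x : ι → R) : (linForm x).IsHomogeneous 1 :=
  IsHomogeneous.sum _ _ _ fun i _ => by
    simpa using (isHomogeneous_C ι (x i)).mul (isHomogeneous_X R i)

theorem isHomogeneous_normSqForm : (normSqForm ι R).IsHomogeneous 2 :=
  IsHomogeneous.sum _ _ _ fun i _ => (isHomogeneous_X R i).mul (isHomogeneous_X R i)

theorem eval_linForm (x y : ι → R) : eval y (linForm x) = x ⬝ᵥ y := by
  simp [linForm, dotProduct]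

theorem eval_normSqForm (y : ι → R) : eval y (normSqForm ι R) = y ⬝ᵥ y := by
  simp [normSqForm, dotProduct]

theorem laplacian_pow (p : MvPolynomial ι R) (a : ℕ) :
    laplacian (p ^ a) =
      a * p ^ (a - 1) * laplacian p + a * (a - 1) * p ^ (a - 2) * ∑ i, pderiv i p ^ 2 := by
  have hterm (i : ι) : pderiv i (pderiv i (p ^ a)) =
      a * p ^ (a - 1) * pderiv i (pderiv i p) + a * (a - 1) * p ^ (a - 2) * pderiv i p ^ 2 := by
    rcases a with _ | a
    · simp
    · simp only [pderiv_pow, pderiv_mul, Derivation.map_natCast, Nat.add_sub_cancel,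
        Nat.succ_sub_succ a 1]
      push_cast
      ring
  simp only [laplacian_apply, hterm, Finset.sum_add_distrib, Finset.mul_sum]

theorem laplacian_linForm_pow (x : ι → R) (a : ℕ) :
    laplacian (linForm x ^ a) = (a * (a - 1) * (x ⬝ᵥ x) : R) • linForm x ^ (a - 2) := by
  have hgrad : ∑ i, pderiv i (linForm x) ^ 2 = C (x ⬝ᵥ x) := by
    simp [pderiv_linForm, dotProduct, sq]
  have hlap : laplacian (linForm x) = 0 := by simp [laplacian_apply, pderiv_linForm]
  rw [laplacian_pow, hgrad, hlap, smul_eq_C_mul]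
  simp only [map_mul, map_sub, map_natCast, map_one]
  ring

theorem laplacian_normSqForm_pow (b : ℕ) :
    laplacian (normSqForm ι R ^ b) =
      (2 * b * (Fintype.card ι + 2 * b - 2) : R) • normSqForm ι R ^ (b - 1) := by
  have hgrad : ∑ i, pderiv i (normSqForm ι R) ^ 2 = 4 * normSqForm ι R := by
    rw [normSqForm, Finset.mul_sum]
    exact Finset.sum_congr rfl fun i _ => by rw [← normSqForm, pderiv_normSqForm]; ring
  have hlap : laplacian (normSqForm ι R) = 2 * (Fintype.card ι : MvPolynomial ι R) := by
    have hterm (i : ι) : pderiv i (2 * X i : MvPolynomial ι R) = 2 := by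
      rw [two_mul, map_add, pderiv_X_self, one_add_one_eq_two]
    simp only [laplacian_apply, pderiv_normSqForm, hterm]
    simp [mul_comm]
  rw [laplacian_pow, hgrad, hlap, smul_eq_C_mul]
  simp only [map_mul, map_sub, map_add, map_natCast, map_ofNat]
  rcases b with _ | _ | b
  · simp
  · simp
  · simp only [Nat.add_sub_cancel, Nat.reduceSubDiff, Nat.cast_add, Nat.cast_one, pow_succ]
    ring

theorem sum_pderiv_linForm_pow_mul_pderiv_normSqForm_pow (x : ι → R) (a b : ℕ) :
    ∑ i, pderiv i (linForm x ^ a) * pderiv i (normSqForm ι R ^ b) =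
      (2 * a * b : R) • (linForm x ^ a * normSqForm ι R ^ (b - 1)) := by
  have hterm (i : ι) : pderiv i (linForm x ^ a) * pderiv i (normSqForm ι R ^ b) =
      (2 * a * b : MvPolynomial ι R) * linForm x ^ (a - 1) * normSqForm ι R ^ (b - 1) *
        (C (x i) * X i) := by
    rw [pderiv_pow, pderiv_pow, pderiv_linForm, pderiv_normSqForm]
    ring
  rw [Finset.sum_congr rfl fun i _ => hterm i, ← Finset.mul_sum, ← linForm, smul_eq_C_mul]
  simp only [map_mul, map_natCast, map_ofNat]
  rcases a with _ | a
  · simp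
  · rw [Nat.add_sub_cancel, pow_succ]
    ring

theorem laplacian_linForm_pow_mul_normSqForm_pow (x : ι → R) (a b : ℕ) :
    laplacian (linForm x ^ a * normSqForm ι R ^ b) =
      (a * (a - 1) * (x ⬝ᵥ x) : R) • (linForm x ^ (a - 2) * normSqForm ι R ^ b) +
      (2 * b * (Fintype.card ι + 2 * a + 2 * b - 2) : R) •
        (linForm x ^ a * normSqForm ι R ^ (b - 1)) := by
  rw [laplacian_mul, laplacian_linForm_pow, laplacian_normSqForm_pow,
    sum_pderiv_linForm_pow_mul_pderiv_normSqForm_pow]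
  simp only [smul_eq_C_mul, map_mul, map_add, map_sub, map_ofNat]
  ring

end Laplacian

section Zonal

open MvPolynomial

/-- The homogeneous form `∑ j, c j r ^ (k - 2 j) s ^ j` of degree `k` in `(r, √s)`; for suitable
coefficients it is a Gegenbauer polynomial. -/
def zonal {A : Type*} [CommRing A] (k : ℕ) (c : ℕ → A) (r s : A) : A :=
  ∑ j ∈ Finset.range (k / 2 + 1), c j * r ^ (k - 2 * j) * s ^ j

/-- The recurrence between the coefficients of the Gegenbauer polynomial of degree `k` for the
sphere in `n`-dimensional space, with denominators cleared. -/
def GegenbauerRec {R : Type*} [CommRing R] (n k : ℕ) (c : ℕ → R) : Prop :=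
  ∀ j < k / 2, c (j + 1) * (2 * (j + 1) * (n + 2 * k - 2 * j - 4)) =
    -(c j * ((k - 2 * j) * (k - 2 * j - 1)))

theorem map_zonal {A B : Type*} [CommRing A] [CommRing B] (f : A →+* B) (k : ℕ) (c : ℕ → A)
    (r s : A) : f (zonal k c r s) = zonal k (fun j => f (c j)) (f r) (f s) := by
  simp [zonal]

theorem GegenbauerRec.map {R A : Type*} [CommRing R] [CommRing A] {n k : ℕ} {c : ℕ → R}
    (hc : GegenbauerRec n k c) (f : R →+* A) : GegenbauerRec n k fun j => f (c j) :=
  fun j hj => by simpa [map_ofNat] using congrArg f (hc j hj)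

variable {ι R : Type*} [Fintype ι] [CommRing R]

/-- The polynomial `y ↦ zonal k c (x ⬝ y) ((x ⬝ x) (y ⬝ y))`. -/
noncomputable def zonalForm (k : ℕ) (c : ℕ → R) (x : ι → R) : MvPolynomial ι R :=
  zonal k (fun j => C (c j)) (linForm x) (C (x ⬝ᵥ x) * normSqForm ι R)

theorem zonalForm_eq_sum (k : ℕ) (c : ℕ → R) (x : ι → R) :
    zonalForm k c x = ∑ j ∈ Finset.range (k / 2 + 1),
      (c j * (x ⬝ᵥ x) ^ j) • (linForm x ^ (k - 2 * j) * normSqForm ι R ^ j) := by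
  rw [zonalForm, zonal]
  refine Finset.sum_congr rfl fun j _ => ?_
  rw [smul_eq_C_mul, map_mul, map_pow]
  ring

theorem eval_zonalForm (k : ℕ) (c : ℕ → R) (x y : ι → R) :
    eval y (zonalForm k c x) = zonal k c (x ⬝ᵥ y) ((x ⬝ᵥ x) * (y ⬝ᵥ y)) := by
  simp [zonalForm, map_zonal, eval_linForm, eval_normSqForm]

theorem isHomogeneous_zonalForm (k : ℕ) (c : ℕ → R) (x : ι → R) :
    (zonalForm k c x).IsHomogeneous k := by
  rw [zonalForm_eq_sum]
  refine IsHomogeneous.sum _ _ _ fun j hj => ?_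
  have hdeg : 0 + (1 * (k - 2 * j) + 2 * j) = k := by have := Finset.mem_range.mp hj; omega
  simpa only [smul_eq_C_mul, hdeg] using (isHomogeneous_C ι (c j * (x ⬝ᵥ x) ^ j)).mul
    (((isHomogeneous_linForm x).pow (k - 2 * j)).mul (isHomogeneous_normSqForm.pow j))

theorem cast_sub_two_mul_div_two_mul_pred (k : ℕ) :
    ((k : R) - 2 * (k / 2 : ℕ)) * (k - 2 * (k / 2 : ℕ) - 1) = 0 := by
  have hk : (k : R) = 2 * (k / 2 : ℕ) + (k % 2 : ℕ) := by
    rw [← Nat.cast_ofNat, ← Nat.cast_mul, ← Nat.cast_add, Nat.div_add_mod]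
  rcases Nat.mod_two_eq_zero_or_one k with h | h <;> rw [hk, h] <;> push_cast <;> ring

theorem laplacian_zonalForm {k : ℕ} {c : ℕ → R} (hc : GegenbauerRec (Fintype.card ι) k c)
    (x : ι → R) : laplacian (zonalForm k c x) = 0 := by
  let lower (j : ℕ) : MvPolynomial ι R := (c j * (x ⬝ᵥ x) ^ (j + 1) *
    ((k - 2 * j) * (k - 2 * j - 1))) • (linForm x ^ (k - 2 * (j + 1)) * normSqForm ι R ^ j)
  let upper (j : ℕ) : MvPolynomial ι R := (c j * (x ⬝ᵥ x) ^ j *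
    (2 * j * (Fintype.card ι + 2 * k - 2 * j - 2))) •
      (linForm x ^ (k - 2 * j) * normSqForm ι R ^ (j - 1))
  have hterm : ∀ j ∈ Finset.range (k / 2 + 1), laplacian ((c j * (x ⬝ᵥ x) ^ j) •
      (linForm x ^ (k - 2 * j) * normSqForm ι R ^ j)) = lower j + upper j := by
    intro j hj
    have hjk : 2 * j ≤ k := by have := Finset.mem_range.mp hj; omega
    rw [map_smul, laplacian_linForm_pow_mul_normSqForm_pow, smul_add, smul_smul, smul_smul,
      Nat.cast_sub hjk, Nat.sub_sub, ← Nat.mul_succ]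
    push_cast
    congr 2 <;> ring
  have hcancel : ∀ j ∈ Finset.range (k / 2), upper (j + 1) = -lower j := by
    intro j hj
    simp only [upper, lower, Nat.add_sub_cancel, ← neg_smul]
    congr 1
    push_cast
    linear_combination (x ⬝ᵥ x) ^ (j + 1) * hc j (Finset.mem_range.mp hj)
  have hlower : lower (k / 2) = 0 := by
    simp only [lower, cast_sub_two_mul_div_two_mul_pred, mul_zero, zero_smul]
  have hupper : upper 0 = 0 := by simp [upper]
  rw [zonalForm_eq_sum, map_sum, Finset.sum_congr rfl hterm, Finset.sum_add_distrib,
    Finset.sum_range_succ lower, Finset.sum_range_succ' upper, Finset.sum_congr rfl hcancel,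
    Finset.sum_neg_distrib, hlower, hupper]
  ring

end Zonal

section Fischer

open MvPolynomial
open scoped Nat

variable {ι : Type*} [Fintype ι]

/-- The Fischer inner product on polynomials: monomials are orthogonal and `X ^ m` has squared
norm `∏ i, (m i)!`. Multiplication by `X i` is adjoint to `∂ᵢ`. -/
noncomputable def fischer : MvPolynomial ι ℝ →ₗ[ℝ] MvPolynomial ι ℝ →ₗ[ℝ] ℝ :=
  (basisMonomials ι ℝ).constr ℝ fun m => (∏ i, ((m i)! : ℝ)) • lcoeff ℝ m

theorem fischer_monomial (m : ι →₀ ℕ) (a : ℝ) (q : MvPolynomial ι ℝ) :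
    fischer (monomial m a) q = a * ((∏ i, ((m i)! : ℝ)) * coeff m q) := by
  have h : (monomial m a : MvPolynomial ι ℝ) = a • basisMonomials ι ℝ m := by
    simp [smul_monomial]
  rw [h, map_smul, fischer, Module.Basis.constr_basis]
  simp

theorem fischer_apply (p q : MvPolynomial ι ℝ) :
    fischer p q = ∑ m ∈ p.support, coeff m p * ((∏ i, ((m i)! : ℝ)) * coeff m q) := by
  conv_lhs => rw [p.as_sum, map_sum, LinearMap.sum_apply]
  simp only [fischer_monomial]

theorem fischer_self_nonneg (p : MvPolynomial ι ℝ) : 0 ≤ fischer p p := by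
  rw [fischer_apply]
  refine Finset.sum_nonneg fun m _ => ?_
  rw [mul_left_comm]
  exact mul_nonneg (Finset.prod_nonneg fun i _ => Nat.cast_nonneg _) (mul_self_nonneg _)

theorem prod_factorial_add_single (m : ι →₀ ℕ) (i : ι) :
    ∏ j, (((m + Finsupp.single i 1 : ι →₀ ℕ) j)! : ℝ) = (m i + 1) * ∏ j, ((m j)! : ℝ) := by
  classical
  rw [Fintype.prod_eq_mul_prod_compl i, Fintype.prod_eq_mul_prod_compl i fun j => ((m j)! : ℝ),
    ← mul_assoc]
  congr 1
  · simp [Nat.factorial_succ]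
  · refine Finset.prod_congr rfl fun j hj => ?_
    simp [Finsupp.single_eq_of_ne (a := i) (by simpa using hj)]

theorem fischer_X_mul (i : ι) (p q : MvPolynomial ι ℝ) :
    fischer (X i * p) q = fischer p (pderiv i q) := by
  induction p using MvPolynomial.induction_on' with
  | monomial m a =>
    rw [X, monomial_mul, one_mul, add_comm, fischer_monomial, fischer_monomial, coeff_pderiv,
      prod_factorial_add_single]
    ring
  | add p p' hp hp' => simp only [mul_add, map_add, LinearMap.add_apply, hp, hp']

theorem fischer_normSqForm_mul (p q : MvPolynomial ι ℝ) :
    fischer (normSqForm ι ℝ * p) q = fischer p (laplacian q) := by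
  simp only [normSqForm, Finset.sum_mul, map_sum, LinearMap.sum_apply, mul_assoc, fischer_X_mul,
    laplacian_apply]

theorem fischer_linForm_pow (x : ι → ℝ) {k : ℕ} {q : MvPolynomial ι ℝ} (hq : q.IsHomogeneous k) :
    fischer (linForm x ^ k) q = k ! * eval x q := by
  induction k generalizing q with
  | zero =>
    obtain ⟨a, rfl⟩ : ∃ a, q = C a :=
      ⟨_, totalDegree_eq_zero_iff_eq_C.mp (Nat.le_zero.mp hq.totalDegree_le)⟩
    rw [pow_zero, ← C_1, C_apply, fischer_monomial]
    simp
  | succ k ih =>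
    have hterm (i : ι) : fischer (C (x i) * X i * linForm x ^ k) q =
        k ! * eval x (X i * pderiv i q) := by
      rw [mul_assoc, ← smul_eq_C_mul, map_smul, LinearMap.smul_apply, fischer_X_mul,
        ih (by simpa using hq.pderiv (i := i)), map_mul, eval_X, smul_eq_mul]
      ring
    calc fischer (linForm x ^ (k + 1)) q
        = ∑ i, fischer (C (x i) * X i * linForm x ^ k) q := by
          rw [pow_succ', ← LinearMap.sum_apply, ← map_sum, ← Finset.sum_mul, linForm]
      _ = k ! * eval x (∑ i, X i * pderiv i q) := by
          rw [Finset.sum_congr rfl fun i _ => hterm i, ← Finset.mul_sum, map_sum]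
      _ = (k + 1)! * eval x q := by
          rw [hq.sum_X_mul_pderiv, map_nsmul, nsmul_eq_mul, Nat.factorial_succ, Nat.cast_mul]
          ring

theorem fischer_zonalForm {k : ℕ} {c : ℕ → ℝ} (hc : GegenbauerRec (Fintype.card ι) k c)
    (x y : ι → ℝ) : fischer (zonalForm k c x) (zonalForm k c y) =
      c 0 * k ! * zonal k c (x ⬝ᵥ y) ((x ⬝ᵥ x) * (y ⬝ᵥ y)) := by
  have horth (j : ℕ) : fischer (linForm x ^ (k - 2 * (j + 1)) * normSqForm ι ℝ ^ (j + 1))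
      (zonalForm k c y) = 0 := by
    rw [pow_succ', mul_left_comm, fischer_normSqForm_mul, laplacian_zonalForm hc, map_zero]
  rw [zonalForm_eq_sum k c x, Finset.sum_range_succ', map_add, map_sum, LinearMap.add_apply,
    LinearMap.sum_apply]
  simp only [map_smul, LinearMap.smul_apply, horth, Finset.sum_const_zero, zero_add,
    mul_zero, Nat.sub_zero, pow_zero, mul_one, smul_eq_mul]
  rw [fischer_linForm_pow x (isHomogeneous_zonalForm k c y), eval_zonalForm, dotProduct_comm y x,
    mul_comm (y ⬝ᵥ y), mul_assoc]

theorem sum_mul_zonal_dotProduct_nonneg {k : ℕ} {c : ℕ → ℝ} (hc₀ : 0 < c 0)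
    (hc : GegenbauerRec (Fintype.card ι) k c) {α : Type*} (S : Finset α) (v : α → ι → ℝ)
    (f : α → ℝ) : 0 ≤ ∑ a ∈ S, ∑ b ∈ S,
      f a * f b * zonal k c (v a ⬝ᵥ v b) ((v a ⬝ᵥ v a) * (v b ⬝ᵥ v b)) := by
  have hsum : fischer (∑ a ∈ S, f a • zonalForm k c (v a)) (∑ b ∈ S, f b • zonalForm k c (v b)) =
      c 0 * k ! * ∑ a ∈ S, ∑ b ∈ S,
        f a * f b * zonal k c (v a ⬝ᵥ v b) ((v a ⬝ᵥ v a) * (v b ⬝ᵥ v b)) := by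
    simp only [map_sum, map_smul, LinearMap.sum_apply, LinearMap.smul_apply, smul_eq_mul,
      fischer_zonalForm hc, Finset.mul_sum]
    refine Finset.sum_congr rfl fun a _ => Finset.sum_congr rfl fun b _ => ?_
    rw [dotProduct_comm (v b) (v a), mul_comm (v b ⬝ᵥ v b)]
    ring
  exact nonneg_of_mul_nonneg_right (hsum ▸ fischer_self_nonneg _) (by positivity)

end Fischer

section InnerProductSpace

variable {E : Type*} [NormedAddCommGroup E] [InnerProductSpace ℝ E] [FiniteDimensional ℝ E]

theorem sum_mul_zonal_inner_nonneg {k : ℕ} {c : ℕ → ℝ} (hc₀ : 0 < c 0)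
    (hc : GegenbauerRec (Module.finrank ℝ E) k c) {α : Type*} (S : Finset α) (v : α → E)
    (f : α → ℝ) : 0 ≤ ∑ a ∈ S, ∑ b ∈ S,
      f a * f b * zonal k c (inner ℝ (v a) (v b)) (‖v a‖ ^ 2 * ‖v b‖ ^ 2) := by
  let b := stdOrthonormalBasis ℝ E
  have hinner (x y : E) : inner ℝ x y = (b.repr x).ofLp ⬝ᵥ (b.repr y).ofLp := by
    rw [← b.repr.inner_map_map, EuclideanSpace.inner_eq_star_dotProduct, star_trivial,
      dotProduct_comm]
  simp only [← real_inner_self_eq_norm_sq, hinner]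
  exact sum_mul_zonal_dotProduct_nonneg hc₀ (by rwa [Fintype.card_fin]) S _ f

end InnerProductSpace

section DistinctTriples

variable {α M : Type*} [DecidableEq α] [AddCommMonoid M]

/-- The sum of `f x y z` over all triples of distinct elements of `S`. -/
def sumDistinctTriples (S : Finset α) (f : α → α → α → M) : M :=
  ∑ x ∈ S, ∑ y ∈ S.erase x, ∑ z ∈ (S.erase x).erase y, f x y z

theorem sumDistinctTriples_eq_sum_ite (S : Finset α) (f : α → α → α → M) :
    sumDistinctTriples S f =
      ∑ x ∈ S, ∑ y ∈ S, ∑ z ∈ S, if x ≠ y ∧ x ≠ z ∧ y ≠ z then f x y z else 0 := by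
  rw [sumDistinctTriples]
  refine Finset.sum_congr rfl fun x _ => ?_
  rw [← Finset.filter_ne, Finset.sum_filter]
  refine Finset.sum_congr rfl fun y _ => ?_
  split_ifs with hxy
  · simp [← Finset.filter_ne, Finset.filter_filter, Finset.sum_filter, hxy]
  · simp [hxy]

theorem sumDistinctTriples_swap₂₃ (S : Finset α) (f : α → α → α → M) :
    sumDistinctTriples S (fun x y z => f x z y) = sumDistinctTriples S f := by
  simp only [sumDistinctTriples_eq_sum_ite]
  refine Finset.sum_congr rfl fun x _ => ?_
  rw [Finset.sum_comm]
  exact Finset.sum_congr rfl fun y _ => Finset.sum_congr rfl fun z _ =>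
    if_congr (by grind) rfl rfl

theorem sumDistinctTriples_swap₁₂ (S : Finset α) (f : α → α → α → M) :
    sumDistinctTriples S (fun x y z => f y x z) = sumDistinctTriples S f := by
  simp only [sumDistinctTriples_eq_sum_ite]
  rw [Finset.sum_comm]
  exact Finset.sum_congr rfl fun x _ => Finset.sum_congr rfl fun y _ =>
    Finset.sum_congr rfl fun z _ => if_congr (by grind) rfl rfl

theorem sumDistinctTriples_add (S : Finset α) (f g : α → α → α → M) :
    sumDistinctTriples S (fun x y z => f x y z + g x y z) =
      sumDistinctTriples S f + sumDistinctTriples S g := by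
  simp only [sumDistinctTriples, Finset.sum_add_distrib]

theorem sumDistinctTriples_nsmul (S : Finset α) (n : ℕ) (f : α → α → α → M) :
    sumDistinctTriples S (fun x y z => n • f x y z) = n • sumDistinctTriples S f := by
  simp only [sumDistinctTriples, Finset.smul_sum]

theorem sumDistinctTriples_of_pair (S : Finset α) (g : α → α → M) :
    sumDistinctTriples S (fun x y _ => g x y) =
      (S.card - 2) • ∑ x ∈ S, ∑ y ∈ S.erase x, g x y := by
  simp only [sumDistinctTriples, Finset.smul_sum, Finset.sum_const]
  refine Finset.sum_congr rfl fun x hx => Finset.sum_congr rfl fun y hy => ?_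
  rw [Finset.card_erase_of_mem hy, Finset.card_erase_of_mem hx, Nat.sub_sub]

theorem sumDistinctTriples_of_point (S : Finset α) (g : α → M) :
    sumDistinctTriples S (fun x _ _ => g x) = ((S.card - 1) * (S.card - 2)) • ∑ x ∈ S, g x := by
  have hpoint : ∀ x ∈ S, ∑ _y ∈ S.erase x, g x = (S.card - 1) • g x := fun x hx => by
    rw [Finset.sum_const, Finset.card_erase_of_mem hx]
  rw [sumDistinctTriples_of_pair S fun x _ => g x, Finset.sum_congr rfl hpoint,
    ← Finset.smul_sum, smul_smul, mul_comm]

theorem sum_sum_sum_eq_add_sumDistinctTriples (S : Finset α) (f : α → α → α → M) :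
    ∑ x ∈ S, ∑ y ∈ S, ∑ z ∈ S, f x y z =
      ∑ x ∈ S, f x x x + ∑ x ∈ S, ∑ y ∈ S.erase x, (f x y y + f x x y + f x y x) +
        sumDistinctTriples S f := by
  simp only [sumDistinctTriples, ← Finset.sum_add_distrib]
  refine Finset.sum_congr rfl fun x hx => ?_
  have hsplit : ∀ y ∈ S.erase x, ∑ z ∈ S, f x y z =
      f x y x + (f x y y + ∑ z ∈ (S.erase x).erase y, f x y z) := fun y hy => by
    rw [← Finset.add_sum_erase S _ hx, ← Finset.add_sum_erase (S.erase x) _ hy]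
  rw [← Finset.add_sum_erase S _ hx, ← Finset.add_sum_erase S _ hx, Finset.sum_congr rfl hsplit]
  simp only [Finset.sum_add_distrib]
  abel

/-- Spreads the degenerate triples evenly over the distinct ones. -/
theorem nsmul_sum_sum_sum_eq_sumDistinctTriples (S : Finset α) (f : α → α → α → M) :
    ((S.card - 1) * (S.card - 2)) • ∑ x ∈ S, ∑ y ∈ S, ∑ z ∈ S, f x y z =
      sumDistinctTriples S fun x y z => ((S.card - 1) * (S.card - 2)) • f x y z +
        (S.card - 1) • (f x y y + f x x y + f x y x) + f x x x := by
  rw [sum_sum_sum_eq_add_sumDistinctTriples, sumDistinctTriples_add, sumDistinctTriples_add,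
    sumDistinctTriples_nsmul, sumDistinctTriples_nsmul,
    sumDistinctTriples_of_point S fun x => f x x x,
    sumDistinctTriples_of_pair S fun x y => f x y y + f x x y + f x y x, smul_smul, smul_add,
    smul_add]
  abel

theorem sumDistinctTriples_pos {S : Finset α} (hS : 3 ≤ S.card) {f : α → α → α → ℝ}
    (hf : ∀ x ∈ S, ∀ y ∈ S, ∀ z ∈ S, x ≠ y → 0 < f x y z) : 0 < sumDistinctTriples S f := by
  refine Finset.sum_pos (fun x hx => ?_) (Finset.card_pos.mp (by omega))
  have hx_card := Finset.card_erase_of_mem hx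
  refine Finset.sum_pos (fun y hy => ?_) (Finset.card_pos.mp (by omega))
  have hy_card := Finset.card_erase_of_mem hy
  refine Finset.sum_pos (fun z hz => ?_) (Finset.card_pos.mp (by omega))
  exact hf x hx y (Finset.mem_of_mem_erase hy) z
    (Finset.mem_of_mem_erase (Finset.mem_of_mem_erase hz)) (Finset.ne_of_mem_erase hy).symm

end DistinctTriples

section GramTriples

open scoped RealInnerProductSpace

variable {E : Type*} [NormedAddCommGroup E] [InnerProductSpace ℝ E]

/-- The inner products between three points, in the order in which the polynomials below take
them. -/
noncomputable def gramTriple (x y z : E) : Fin 3 → ℝ := ![⟪x, y⟫, ⟪x, z⟫, ⟪y, z⟫]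

namespace PolyExpr

/-- The sum of a polynomial in three variables over all permutations of the variables. -/
def symmetrize (e : PolyExpr (Fin 3)) : PolyExpr (Fin 3) :=
  e + e.rename ![0, 2, 1] + e.rename ![1, 0, 2] + e.rename ![1, 2, 0] + e.rename ![2, 0, 1]
    + e.rename ![2, 1, 0]

theorem l1Bound_symmetrize (e : PolyExpr (Fin 3)) : e.symmetrize.l1Bound = 6 * e.l1Bound := by
  simp only [symmetrize, l1Bound_add, l1Bound_rename]
  ring

theorem degBound_symmetrize (e : PolyExpr (Fin 3)) : e.symmetrize.degBound = e.degBound := by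
  simp [symmetrize]

/-- The six permutations of the three points induce all six permutations of their inner
products. -/
theorem sumDistinctTriples_eval_symmetrize [DecidableEq E] (S : Finset E) (e : PolyExpr (Fin 3)) :
    sumDistinctTriples S (fun x y z => e.symmetrize.eval (gramTriple x y z)) =
      6 * sumDistinctTriples S fun x y z => e.eval (gramTriple x y z) := by
  let f (x y z : E) : ℝ := e.eval (gramTriple x y z)
  have hsymm (x y z : E) : e.symmetrize.eval (gramTriple x y z) =
      f x y z + f y x z + f x z y + f z x y + f y z x + f z y x := by
    have hcomp (v : Fin 3 → ℝ) (i j k : Fin 3) : v ∘ ![i, j, k] = ![v i, v j, v k] :=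
      (FinVec.map_eq v _).symm
    simp [symmetrize, f, gramTriple, hcomp, real_inner_comm]
  simp only [hsymm, sumDistinctTriples_add]
  rw [sumDistinctTriples_swap₁₂ S fun x y z => f z x y,
    sumDistinctTriples_swap₁₂ S fun x y z => f x z y,
    sumDistinctTriples_swap₂₃ S fun x y z => f y x z,
    sumDistinctTriples_swap₁₂ S f, sumDistinctTriples_swap₂₃ S f]
  ring

end PolyExpr

theorem sumDistinctTriples_nonneg_of_sum_nonneg [DecidableEq E] {S : Finset E}
    {k : (Fin 3 → ℝ) → ℝ} (hS : ∀ x ∈ S, ‖x‖ = 1)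
    (hk : ∀ x ∈ S, 0 ≤ ∑ y ∈ S, ∑ z ∈ S, k (gramTriple x y z)) :
    0 ≤ sumDistinctTriples S fun x y z =>
      ((S.card - 1) * (S.card - 2)) • k (gramTriple x y z) +
        (S.card - 1) • (k ![⟪x, y⟫, ⟪x, y⟫, 1] + k ![1, ⟪x, y⟫, ⟪x, y⟫] + k ![⟪x, y⟫, 1, ⟪x, y⟫])
        + k ![1, 1, 1] := by
  have hnonneg := nsmul_nonneg (Finset.sum_nonneg hk) ((S.card - 1) * (S.card - 2))
  rw [nsmul_sum_sum_sum_eq_sumDistinctTriples] at hnonneg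
  have hself : ∀ x ∈ S, ⟪x, x⟫ = 1 := fun x hx => by
    rw [real_inner_self_eq_norm_sq, hS x hx, one_pow]
  refine hnonneg.trans_eq (Finset.sum_congr rfl fun x hx => Finset.sum_congr rfl fun y hy =>
    Finset.sum_congr rfl fun z _ => ?_)
  simp only [gramTriple, hself x hx, hself y (Finset.mem_of_mem_erase hy), real_inner_comm x y]

variable {x : E}

theorem inner_orthogonalProjectionOnto_orthogonal_singleton (hx : ‖x‖ = 1) (y z : E) :
    ⟪(ℝ ∙ x)ᗮ.orthogonalProjectionOnto y, (ℝ ∙ x)ᗮ.orthogonalProjectionOnto z⟫ =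
      ⟪y, z⟫ - ⟪x, y⟫ * ⟪x, z⟫ := by
  have hxx : ⟪x, x⟫ = 1 := by rw [real_inner_self_eq_norm_sq, hx, one_pow]
  rw [Submodule.coe_inner]
  simp only [Submodule.coe_orthogonalProjectionOnto_apply, Submodule.starProjection_orthogonal_val,
    Submodule.starProjection_unit_singleton ℝ hx, inner_sub_left, inner_sub_right,
    real_inner_smul_left, real_inner_smul_right, hxx, real_inner_comm x y]
  ring

theorem sum_mul_zonal_gram_nonneg [FiniteDimensional ℝ E] {n k : ℕ} {c : ℕ → ℝ}
    (hn : Module.finrank ℝ E = n + 1) (hc₀ : 0 < c 0) (hc : GegenbauerRec n k c)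
    (hx : ‖x‖ = 1) {S : Finset E} (hS : ∀ y ∈ S, ‖y‖ = 1) (f : E → ℝ) :
    0 ≤ ∑ y ∈ S, ∑ z ∈ S, f y * f z *
      zonal k c (⟪y, z⟫ - ⟪x, y⟫ * ⟪x, z⟫) ((1 - ⟪x, y⟫ * ⟪x, y⟫) * (1 - ⟪x, z⟫ * ⟪x, z⟫)) := by
  have hfinrank : Module.finrank ℝ (ℝ ∙ x)ᗮ = n :=
    have : Fact (Module.finrank ℝ E = n + 1) := ⟨hn⟩
    Submodule.finrank_orthogonal_span_singleton (ne_zero_of_norm_ne_zero (by simp [hx]))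
  have hnorm : ∀ y ∈ S, ‖(ℝ ∙ x)ᗮ.orthogonalProjectionOnto y‖ ^ 2 =
      1 - ⟪x, y⟫ * ⟪x, y⟫ := fun y hy => by
    rw [← real_inner_self_eq_norm_sq, inner_orthogonalProjectionOnto_orthogonal_singleton hx,
      real_inner_self_eq_norm_sq, hS y hy, one_pow]
  refine (sum_mul_zonal_inner_nonneg hc₀ (hfinrank.symm ▸ hc) S
    (fun y => (ℝ ∙ x)ᗮ.orthogonalProjectionOnto y) f).trans_eq ?_
  refine Finset.sum_congr rfl fun y hy => Finset.sum_congr rfl fun z hz => ?_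
  rw [inner_orthogonalProjectionOnto_orthogonal_singleton hx, hnorm y hy, hnorm z hz]

end GramTriples

section ThreePointKernels

open scoped RealInnerProductSpace

namespace PolyExpr

/-- The variable standing for the inner product `⟪x, y⟫` of a triple of points `x, y, z`. -/
abbrev u : PolyExpr (Fin 3) := var 0

/-- The variable standing for the inner product `⟪x, z⟫` of a triple of points `x, y, z`. -/
abbrev v : PolyExpr (Fin 3) := var 1

/-- The variable standing for the inner product `⟪y, z⟫` of a triple of points `x, y, z`. -/
abbrev t : PolyExpr (Fin 3) := var 2

variable {σ : Type*}

/-- The sum of the squares of a list of polynomials. -/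
def sumSq (l : List (PolyExpr σ)) : PolyExpr σ := (l.map fun p => p * p).sum

theorem eval_sumSq_nonneg (x : σ → ℝ) (l : List (PolyExpr σ)) : 0 ≤ (sumSq l).eval x := by
  rw [sumSq, eval_list_sum, List.map_map]
  refine List.sum_nonneg fun a ha => ?_
  obtain ⟨p, _, rfl⟩ := List.mem_map.mp ha
  exact mul_self_nonneg (p.eval x)

/-- The polynomial in `x` with the given coefficients, lowest degree first, in Horner form. The
singleton case avoids a spurious factor `x` that would spoil `degBound`. -/
def horner (x : PolyExpr σ) : List (PolyExpr σ) → PolyExpr σ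
  | [] => 0
  | [a] => a
  | a :: b :: l => a + x * horner x (b :: l)

/-- The univariate polynomial with integer coefficients `c`, lowest degree first. -/
def univariate (c : List ℤ) : PolyExpr Unit := horner (var ()) (c.map const)

/-- The polynomial `zonal` with integer coefficients `c`, evaluated at `r` and `s`. -/
def zonalExpr (k : ℕ) (c : List ℤ) (r s : PolyExpr σ) : PolyExpr σ :=
  ((List.range (k / 2 + 1)).map fun j => const (c.getD j 0) * r ^ (k - 2 * j) * s ^ j).sum

theorem eval_zonalExpr {A : Type*} [CommRing A] (x : σ → A) (k : ℕ) (c : List ℤ)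
    (r s : PolyExpr σ) :
    (zonalExpr k c r s).eval x = zonal k (fun j => (c.getD j 0 : A)) (r.eval x) (s.eval x) := by
  rw [zonalExpr, eval_list_sum, List.map_map, zonal, ← List.toFinset_range,
    List.sum_toFinset _ List.nodup_range]
  simp [Function.comp_def]

/-- With `N = S.card`, the sum of this polynomial over the inner products of triples of distinct
points of `S` is `(N - 1) (N - 2)` times the sum of `K` over all triples: on the sphere, `K` at the
triples with coincident points depends on `u` alone. -/
def spreadDegenerate (N : ℕ) (K : PolyExpr (Fin 3)) : PolyExpr (Fin 3) :=
  const ((N - 1) * (N - 2) : ℕ) * K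
    + const (N - 1 : ℕ) * (K.subst ![u, u, 1] + K.subst ![1, u, u] + K.subst ![u, 1, u])
    + K.subst ![1, 1, 1]

variable {E : Type*} [NormedAddCommGroup E] [InnerProductSpace ℝ E]

theorem sumDistinctTriples_eval_spreadDegenerate_nonneg [DecidableEq E] {S : Finset E}
    {K : PolyExpr (Fin 3)} (hS : ∀ x ∈ S, ‖x‖ = 1)
    (hK : ∀ x ∈ S, 0 ≤ ∑ y ∈ S, ∑ z ∈ S, K.eval (gramTriple x y z)) :
    0 ≤ sumDistinctTriples S fun x y z =>
      (spreadDegenerate S.card K).eval (gramTriple x y z) := by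
  have heval (s : Fin 3 → PolyExpr (Fin 3)) (r : Fin 3 → ℝ) :
      (K.subst s).eval r = K.eval ![(s 0).eval r, (s 1).eval r, (s 2).eval r] := by
    rw [eval_subst]
    exact congrArg (eval · K) (List.ofFn_inj.mp rfl)
  simpa [spreadDegenerate, heval, gramTriple, nsmul_eq_mul, -eval_subst, -smul_add] using
    sumDistinctTriples_nonneg_of_sum_nonneg (k := fun r => K.eval r) hS hK

theorem false_of_eval_symmetrize_eq_zero {S : Finset E} {K P : PolyExpr (Fin 3)}
    (hcard : 3 ≤ S.card) (hS : ∀ x ∈ S, ‖x‖ = 1)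
    (hK : ∀ x ∈ S, 0 ≤ ∑ y ∈ S, ∑ z ∈ S, K.eval (gramTriple x y z))
    (hP : ∀ x ∈ S, ∀ y ∈ S, ∀ z ∈ S, x ≠ y → 0 < P.eval (gramTriple x y z))
    (hzero : ∀ r : Fin 3 → ℝ, (spreadDegenerate S.card K + P).symmetrize.eval r = 0) : False := by
  classical
  have hsum := sumDistinctTriples_eval_symmetrize S (spreadDegenerate S.card K + P)
  simp only [hzero, eval_add, sumDistinctTriples_add] at hsum
  have hzero_sum : sumDistinctTriples S (fun _ _ _ => (0 : ℝ)) = 0 := by simp [sumDistinctTriples]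
  have hKsum := sumDistinctTriples_eval_spreadDegenerate_nonneg hS hK
  have hPsum := sumDistinctTriples_pos hcard hP
  linarith

theorem sum_eval_list_sum_nonneg {S : Finset E} {x : E} {l : List (PolyExpr (Fin 3))}
    (hl : ∀ e ∈ l, 0 ≤ ∑ y ∈ S, ∑ z ∈ S, e.eval (gramTriple x y z)) :
    0 ≤ ∑ y ∈ S, ∑ z ∈ S, l.sum.eval (gramTriple x y z) := by
  induction l with
  | nil => simp
  | cons e l ih =>
    simp only [List.sum_cons, eval_add, Finset.sum_add_distrib]
    exact add_nonneg (hl e List.mem_cons_self) (ih fun e' he' => hl e' (List.mem_cons_of_mem e he'))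

end PolyExpr

/-- A summand of a three-point kernel: the zonal polynomial of degree `degree` in the components of
`y` and `z` orthogonal to `x`, multiplied by `∑ w, w(⟪x, y⟫) w(⟪x, z⟫)` over the univariate
polynomials `w` with coefficient lists in `weights`. -/
structure KernelTerm where
  degree : ℕ
  zonalCoeffs : List ℤ
  weights : List (List ℤ)

namespace KernelTerm

open PolyExpr

/-- The summand as a polynomial in the inner products. -/
def toPolyExpr (T : KernelTerm) : PolyExpr (Fin 3) :=
  (T.weights.map fun w => (univariate w).subst (fun _ => u) * (univariate w).subst (fun _ => v) *
    zonalExpr T.degree T.zonalCoeffs (t - u * v) ((1 - u * u) * (1 - v * v))).sum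

/-- The zonal coefficients are positive multiples of those of a Gegenbauer polynomial for the sphere
in `n`-dimensional space. -/
def IsGegenbauer (n : ℕ) (T : KernelTerm) : Prop :=
  0 < T.zonalCoeffs.getD 0 0 ∧ GegenbauerRec n T.degree fun j => T.zonalCoeffs.getD j 0

instance (n : ℕ) : DecidablePred (IsGegenbauer n) := fun T => by
  unfold IsGegenbauer GegenbauerRec
  infer_instance

variable {E : Type*} [NormedAddCommGroup E] [InnerProductSpace ℝ E] [FiniteDimensional ℝ E]

theorem sum_eval_toPolyExpr_nonneg {n : ℕ} {T : KernelTerm} (hT : T.IsGegenbauer n)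
    (hn : Module.finrank ℝ E = n + 1) {S : Finset E} (hS : ∀ y ∈ S, ‖y‖ = 1) {x : E}
    (hx : ‖x‖ = 1) : 0 ≤ ∑ y ∈ S, ∑ z ∈ S, T.toPolyExpr.eval (gramTriple x y z) := by
  obtain ⟨hpos, hrec⟩ := hT
  have hpos' : (0 : ℝ) < (T.zonalCoeffs.getD 0 0 : ℤ) := Int.cast_pos.mpr hpos
  have hrec' : GegenbauerRec n T.degree fun j => ((T.zonalCoeffs.getD j 0 : ℤ) : ℝ) :=
    hrec.map (Int.castRingHom ℝ)
  refine sum_eval_list_sum_nonneg fun e he => ?_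
  obtain ⟨w, _, rfl⟩ := List.mem_map.mp he
  simpa [eval_zonalExpr, gramTriple] using sum_mul_zonal_gram_nonneg hn hpos' hrec' hx hS
    fun y => (univariate w).eval fun _ => ⟪x, y⟫

end KernelTerm

end ThreePointKernels

/-- The coefficients `c i j k` of `∑ c i j k x ^ i y ^ j z ^ k` as nested lists. -/
abbrev Coeffs₃ := List (List (List ℤ))

/-- The polynomial with coefficients `c`. -/
def PolyExpr.trivariate (c : Coeffs₃) : PolyExpr (Fin 3) :=
  horner (var 0) (c.map fun c' => horner (var 1) (c'.map fun c'' =>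
    (univariate c'').subst fun _ => var 2))

namespace DimensionSix

open PolyExpr

/-- The summands of the three-point kernel, with the zonal polynomials of `5`-dimensional space.
Each entry of `weights` is a rank-one factor of a positive semidefinite matrix. -/
def kernelTerms : List KernelTerm :=
  [⟨0, [1], [[-62431415722, -28648830272, 62010240697, 92121849029, -84478902532, 284895270780,
    578030419553, -1622628463581, -1265943182330, 3307255987461, 2786405969741], [-53358585586,
    33505460498, 145562306382, -134843615431, -554459292021, -626817056579, 512541558726,
    2491269998140, 2098945539693, -1410978, -487353785830], [7175534147, 57710886474,
    -45004802523, -148400364303, 257006339953, -165650221232, -1008507355882, -870863,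
    1239130774837, 82360, -575857366022], [2157983854, -53688569558, -129771916254, 100024380491,
    223624226700, 180660412231, 152828182194, -106603, 119331, 206173, 32352460267]]⟩,
   ⟨1, [1], [[-33445327873, -126952175750, 181471207406, 591146209841, 519180599480,
    -898077142774, -3473097842599, -1057624291702, 3915414691060, 2602694378737], [-13598512283,
    -6101863379, -49284579229, -530736591935, 175496450575, 2574247711015, 1509809269383,
    -1673293764839, -1700196, 1508647876389], [-4409965292, -43015766482, -185761923572,
    -47977871164, -22075222257, -53128, 880319535178, 394579127332, -135167, 142344453606],
    [-23195664809, 84463754966, 66168076096, -210320243255, 431965215, -338112, 167584,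
    -470612326520, -204764, 640149532107], [-1433671887, -18716904119, 64684572347, -35558392853,
    205317974846, 152596, -315301, -140158584467, -110709, -173263]]⟩,
   ⟨2, [5, -1], [[-14428197589, -10532144807, 159979032149, -148392105114, -1046128333842,
    378532740839, 2461932882816, 430738517812, -1192162370382], [-10588724601, 34655670896,
    144290498586, 130752474382, -658734808321, -1593758326366, -1532938, 2011841474571,
    916458581575], [-9282038254, -55376796228, -71956025919, -3519033611, 442500021379,
    191968254591, -439920, 754430, 1906721738], [-5765660447, -45727378049, -74186288630,
    -15329883799, 210163, 276746513877, -763934, 694406, 363748367475], [-635618176, -68510372007,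
    22743821502, 231104989162, 76672, -10428866361, 87614, -8965, 186484], [-3440040326,
    -5578822991, 112848953714, 70156, -226663, -28147797610, -37514, -9577, 149654]]⟩,
   ⟨3, [7, -3], [[-131885162, 12014853349, -98256577079, -646553145410, 534994841727,
    2735695006473, 138933841077, -2112834283135], [1541823411, 25835326287, 70206096346,
    -100990541827, -820864942544, 1226300, 2144182335530, 1467652690022], [17283860757,
    43875667920, -3342462770, -75640765524, 144623209016, 515875, -86150, 392955525249],
    [-5867217481, 73190139626, 53619586851, -45596461373, -31394385596, 294972, -88133, 16444]]⟩,
   ⟨4, [21, -14, 1], [[-2815069501, -532642923, 122448500111, -240524563178, -1005872983782,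
    699512392135, 1902796432066], [4516380819, 746961853, -128101835426, -151768966485,
    547675970833, 735439487402, -1098293], [6883879080, -29520890143, -86358684247, 150623570419,
    347153659773, -218, -101140]]⟩,
   ⟨5, [33, -30, 5], [[-3981037011, 8644299973, -44844798221, -485174238231, 262654645490,
    1246953508122], [11184344856, 2280907932, -32310411388, -57099012500, 126119279101, 805821],
    [-11525057573, -13433622533, -1951644901, 111814998257, 1400414, -413103]]⟩,
   ⟨6, [429, -495, 135, -5], [[1550997679, 2443148783, -53112774545, -10013914919, 182129988904]]⟩,
   ⟨7, [715, -1001, 385, -35], [[-106395488, -5600213473, -2239108640, 58657955637]]⟩]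

/-- Symmetric square roots, as polynomials in `e₃`, `e₂`, `e₁`. -/
def trivialRoots : List Coeffs₃ :=
  [[[[3663718666, -128601222584, -711504960998, -669423083366, 2584950088855, 5051423123562,
    975236779633, -2108157866427, 457969948546, 1595249409937, 388588446650], [-878066912963,
    559751798412, -2159521714058, -15830204588517, -7037555912217, 15941305413179, -2832688588250,
    -14020396062687, -3410262971111], [-2645673028973, 896775950770, -3579977949089,
    -52439438549901, 6575750827136, 45747235129722, 14644597397503], [-1703557808675,
    54780051417984, 3248474535218, -78147740990598, -40380306240803], [-17800598243506,
    74032401322664, 35999282067300], [14937009825477]], [[-2181896564179, 4869594532917,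
    14535112306523, 19083430400321, 8638075733849, 1633546540498, 1271164890543, -2183036772697],
    [-9368304244262, 15173887892320, 61178036520658, -12494005932060, 8230211581272,
    24366365195774], [-92875502360132, 10142742255225, -5322052738234, 25640106231385],
    [-148046078856292, -160427492314291]], [[27912685836593, -2906491845719, -16675007354075,
    -58040988094297, -54847487214324], [36079284162738, 291651400374966, 143891188641143],
    [138507066363002]], [[-208016517024727, -150672246891527]]],
   [[[-1128969860, -17869670069, -38061372384, 372272513585, 2067805257402, 1514900036901,
    -6098768497521, -11482543021530, -6003588058722, -14674798538, 427532589606], [-78509083515,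
    -650630979161, -5189605034848, -6046027422652, 26605902136615, 67747261620296, 46910118160246,
    -996154887892, -9116072276831], [-1089367985640, 5195921485363, -16236029240827,
    -105344098596707, -115415946306121, 14405736337394, 58425902880724], [-1293474300333,
    36788323489424, 80975096695542, -46907582028207, -136575464211053], [13306641713467,
    31163093778824, 83341781095320], [28986894425323]], [[-2404135356449, 1440302832118,
    10687634921653, -20211270713225, -64056070656600, -47764942011313, -14313825536858,
    1221176304325], [-28909117375381, -21455496333023, 159965516420271, 229253465073574,
    40915328061773, -76022232605819], [-88685595608598, -243956208372624, 76621024443170,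
    335398810012660], [-67739587528328, -290961302751364]], [[14697079159347, -38023352730984,
    -83149436286168, -53471914714788, 36285311594247], [143896057843068, -59754243857771,
    -329774628419826], [235241466729889]], [[11241368056666, 157706075183735]]],
   [[[3395132314, 47442930260, -103014973655, -1348323009039, -1263210708087, 2880623062858,
    6017080724699, 6431505272928, 4194627210409, -984535417682, -1823868350459], [532827682509,
    4904295472773, 4086829479269, -17678854497170, -39720440192722, -45066705353981,
    -30210623156047, 8236182693009, 15875431927249], [835082655869, 21192536536922,
    64061035117581, 87695106007568, 65623385631932, -22702446344817, -48818832827614],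
    [-3672576900022, -21381660922293, -40520905578675, 23877702473563, 70977352739534],
    [9604955915934, -15004052065607, -60818870452397], [17042957195890]], [[-7875574079771,
    -7760348837044, 28795573942948, 49883770065102, 45911760425596, 35620756619738,
    -7017088628269, -17004244870302], [-37660423577645, -133337752679279, -182121778791885,
    -150128683795937, 25687359474437, 89083615643223], [972993427844, 84464938577710,
    16033337973220, -142165161580881], [-7734904633286, 121097388425543]], [[44506836233197,
    150473807149848, 141174436323130, -23926909460309, -52846917872610], [-84077509938680,
    -40499551571552, 90415496760742], [-75017840479073]], [[5624057991219, 800385684979]]],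
   [[[653099974, -5937941192, -37302400384, -72379887846, -377644182012, -510996740786,
    1757436549306, 4322678819833, 1607249343344, -2410274913989, -1643899568959], [-9862837989,
    92204260570, 1653513939136, 2809270012215, -9570487073538, -28222420873542, -14184483441240,
    20700631415736, 16853589518936], [-859414264790, -3641306049078, 11692510360561,
    49825229259468, 41223370637465, -57233260713495, -58460367260105], [-4422748961027,
    -18545269259491, -38917592287833, 52903465069450, 77828925502513], [1906259435091,
    -4462112654258, -40573952556450], [24279914782316]], [[678314894446, -1379776862559,
    -5664306266445, 10389131333247, 33889858721983, 14796250664689, -23673497461217,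
    -20118043417207], [11888251209593, -7192946273942, -94097629025935, -86672069854258,
    109406769800872, 123713202610749], [25926373336249, 110436081906068, -100341992828766,
    -169944891827793], [-37933445205779, -24521938358656]], [[116509163298, 39949369146559,
    39931217500669, -63870088965626, -85047709049129], [-73092930914077, 118014922677267,
    221336975048184], [66442773228649]], [[-63381114335395, -120156872414927]]],
   [[[-283936974, -920139852, 18659878137, 92479180430, 70921088698, -334610363562,
    -1229236111767, -1220041088385, 2031192889762, 4734705757236, 2381555299714], [-25652133935,
    -220796797572, -114598857886, 2455942015248, 8006864164208, 5277117133349, -22437341474715,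
    -45271908991101, -23555803215913], [-686515449835, -4959393073359, -11276886759861,
    3096768074389, 75700763865461, 140218472808825, 77951279768202], [-2876223339536,
    -19360069062633, -76610144496434, -137808687724859, -87693521731172], [2069426318221,
    -6939519466663, -1218665018409], [16391051961239]], [[95720894677, 1248056707046,
    -339494598109, -14465169403237, -15110541819313, 30414664461179, 63267834447790,
    33271454035617], [5994223221285, 40743798371778, 27863124257416, -185327423567351,
    -375115578518075, -212390669238671], [21958239250763, 226645120696049, 537895181491839,
    351565023539572], [-8832989509840, -43458922612662]], [[-25465475260185, -31545294096394,
    98345491837670, 222713053828440, 146542228973241], [-145981013455699, -567024295392615,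
    -460501981944113], [46087601453344]], [[138810666693495, 202374975447376]]]]

/-- Coefficients, as polynomials in `e₃`, `e₂`, `e₁`, of `3 u - e₁` and
`3 u ^ 2 - (u ^ 2 + v ^ 2 + t ^ 2)` in the square roots belonging to the standard representation of
the symmetric group. -/
def standardRoots : List (Coeffs₃ × Coeffs₃) :=
  [([[[56081293423, -1069731952863, -3147931535736, 5963652301963, 17126223019020, -3349520066999,
    -22769868828791, -9686932383770, 1428550280408, 1560817196990], [3183293434645,
    -15796098164101, -56274457456070, 26466744601001, 139018658641758, 68220756234368,
    -13599015023503, -14484848243214], [31927323713320, -42566163154897, -247345794475210,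
    -152762468860663, 39246640954548, 37232104640345], [82952992842256, 78517818775683,
    -37555921269291, -12523161665495], [13192529797675, -12850914411853]], [[15763669756883,
    30934246967814, -29264784949402, -64911904501078, -6549434728513, 27311067845058,
    22396176735964], [89432251157938, 211611051738622, 59128672566168, -126705882248615,
    -128890622134935], [28320790825078, 76882322864131, 104180236394921], [-2565168444995]],
    [[23768051649814, 60882181271833, 115042550872675, 109872732562298], [19451147275211,
    -138165262362552]], [[43453465763744]]], [[[1302241795128, 3420634051009, -4105131216612,
    -18634593771899, -8376563042624, 17540482616826, 17669084525061, 2297143494403,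
    -2563177511121], [10028611701940, 47000213708649, 21343859275881, -98348624916021,
    -106241424464711, -11462320101006, 20081671971780], [8624111905233, 146941201966826,
    179621314487947, 14885136080918, -43326758532424], [-47299456118597, -6116511935744,
    15852554817675], [-5665542102979]], [[-30985818237683, -40257943281733, 22667046123020,
    45084170292810, -2628119890371, -26580550749970], [-122277647562454, -127342753141522,
    37370829919638, 106729729754748], [-16049274521053, -7181158739585]], [[-37446791099392,
    -100547628478289, -108416529886580], [20662032400914]]]),
   ([[[-85211156675, 1637043121148, 48741585077, -12326989879802, -2433315878330, 24744189901015,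
    11473422853643, -2601114078802, 324609679156, 1003269570260], [-2397792495732, 24870277502601,
    21939591084929, -93963638861630, -82607568238707, 2529643311831, -4237234981991,
    -11408014539056], [-13005850098187, 82619513637353, 139471829574029, -18931245617514,
    4022599715963, 47091278984885], [-21598998984727, 58725575237881, 14553395698057,
    -71867714336502], [-10313073173109, 15959710473738]], [[-15397266263287, -18680008092041,
    63889571989056, 60667903364937, 46509708458273, 17107728271937, 153634444934],
    [-71180675131992, -187465301894708, -94816866493068, -49317763642295, -45209049538771],
    [-55211076066645, 37824483888746, 157071032306122], [-16496969485433]], [[27985107714870,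
    145159195453024, 36844307180351, -18238191545050], [-107798305000373, -79123333945752]],
    [[-18786160061017]]], [[[-1532598950325, 2095494572565, 12480185209119, -6703013022161,
    -30834648258463, -1475244004923, 13991594448412, -63370961970, -3396964685136],
    [-20563402362312, 4413405358794, 102604082257472, 26487530521755, -66116918415461,
    6438940155948, 31074354362352], [-72244536287975, -47097954006206, 121527153707593,
    -19628450345766, -96238537501444], [-56014895708014, 17866694026998, 99981261784252],
    [-2965109629053]], [[11279696679739, -30964095391727, -20238925787773, -14570258888391,
    -18653455463963, -17069731230799], [57410675664346, -80269151978738, 26586232970919,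
    122556335589778], [-27658524332067, -195570762042723]], [[19307113315560, 38555332412845,
    -23333130741002], [88709499811044]]]),
   ([[[16434598950, -329245048638, -1014138823218, 2387034682947, 5941798978490, -3217686088505,
    -8840144397988, -2466407920176, -2936784107313, -1960054352236], [1441450962091,
    -5368831511541, -17588132697674, 14093142087117, 48294442270901, 18895740053974,
    12772567257294, 11209804126029], [8561832875199, -9511241495331, -72119903852568,
    -40939192740451, 3388978304682, -17260634175644], [13905851291082, 9331961657509,
    -40282829506253, 2394607795450], [8319090193775, 20039033814783]], [[5150628728517,
    3397055250726, -18876884446724, -22534808465567, -3304784279932, -25437770453511,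
    -11648343001899], [19301981741133, 67840266884920, 50742081932691, 37908007322199,
    23430401893879], [6003419012597, 48306853356111, -35507204484710], [-17643592021626]],
    [[-20357443324686, -41898276236623, -53398913739240, 6563574527504], [10879071994147,
    45278399061257]], [[1051855660582]]], [[[405854541929, 1110784190132, -1773520882827,
    -5087746489719, 811802750177, 1514709956787, -2354255940558, 6061307093904, 5272139833905],
    [4521740910303, 9315325168158, -9268106981478, -8607828443188, 14701602447353,
    -30755362347004, -35428027189177], [15189003972589, 22653781082049, -20963409206726,
    30169138620953, 74808822215688], [12815328640544, 8108045380467, -51763675763604],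
    [-7489386394391]], [[-1716009021604, 5802282535456, -16765492013015, -38201273285234,
    35358146592827, 33327163760502], [-12368476334456, 40254144804224, -51182247346151,
    -99583583823828], [-19025792720706, 94130496998745]], [[-2605328610059, 30037845759437,
    -2156525447136], [-23373628241232]]]),
   ([[[-26181379850, -115743922457, -400708791204, 1686683296996, 3684468880887, -3478841909677,
    -8437058691113, -2574109009682, 1564835641484, 1526245811745], [-1165041767520,
    -5955241396725, -3447480279523, 31767055383048, 38501521021522, -7814752452230,
    -15553194605431, -6090986659349], [-3108950634023, -45716437837589, -43225802779634,
    66185107245506, 42184591797979, -13681883438736], [4872174047270, -67023601766388,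
    -34096136435513, 68733076114196], [641422002605, -47108587688595]], [[6046408810814,
    2654825825866, -29745211143777, -28913421411299, 5644938236386, 11652535687010,
    12157881313526], [44766508570825, 43857266681014, -66893554490426, -34594706302410,
    -15319395367329], [57543785716577, 14480294114431, -73528954864842], [40823406697703]],
    [[4459441170904, 2265849045655, -4141518550398, 28944045233954], [21844370462997,
    -11304605823926]], [[17207547161609]]], [[[306820167656, 2161111220842, 683910589592,
    -9867634909855, -10508368930396, 5672565101064, 9677686721787, 174215678107, -2667729729165],
    [126996707067, 19197934820910, 26482750157948, -20965085809038, -33750843405445,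
    3109673554172, 14395680917701], [-3305936523953, 23417032390667, 19556091713589,
    -9938806097959, -10236110722558], [5234037448890, 10359521090581, -23312594369664],
    [8756194565730]], [[-11685460915695, -17507572847245, 341477636073, 593415380351,
    -15504785264286, -18088989833384], [-20086864384128, 23457523813909, 29150564892385,
    26085349644383], [-17167588989344, 37440469782618]], [[-14939468808345, 613404202277,
    -13033555952085], [-12031292040384]]]),
   ([[[-5779277605, -170061439216, 95116224437, 1259474204737, -195678430375, -2995653568724,
    -892957404447, 1964280233970, 2545525396022, 1167208049423], [-381761543786, -2871184635586,
    2254245698206, 16384901423907, 2836695039134, -19892975034509, -14826299144765,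
    -2902833679343], [-2001395567959, -16917536490843, -197177412274, 52615056765272,
    24507844155377, -15055932341483], [545643991504, -31574905072632, -20588313470262,
    36415823760818], [10809002321202, 1652955807932]], [[1503854468558, -1083962163081,
    -14901168500021, -3605257460441, 16033849430952, 16737398162563, 6574427408730],
    [9801835423133, 9994798934738, -57790278060210, -26784018290493, 26284185493759],
    [17343960523922, 2278611296725, -120885964453410], [5127272673378]], [[-4698756050186,
    -2799821805945, 2925636250201, 1366394357782], [23159641323126, 97365649791165]],
    [[-8163920315558]]], [[[226842874320, 359400668299, -650515938569, -1023050477503,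
    -419984975978, -1761757987387, -1904702953473, -549082397224, 96895643058], [1629728795319,
    1598533075061, -2257226449980, 10026400021739, 16527375740408, -2933008963967,
    -8328510969368], [6572606080831, -10419963759444, -35962897339297, 19021453387908,
    42536248869004], [14514951070427, -5091075624715, -49584598224088], [-1398090689327]],
    [[-2013718895404, 1919018685762, -12712115334113, -21040441019941, 453077587639,
    8401995690894], [1542561404329, 51151297836744, -39753584743404, -83938498144068],
    [-3506145570527, 116065041957850]], [[-4294117107543, 32976130923928, 38937138066614],
    [-61135536741340]]]),
   ([[[-838337380, 30302428635, 19507608709, -222602081893, -208725451968, 485285012698,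
    707911789658, -191746805514, -870301978764, -444233556235], [-4731790758, 673415658368,
    926288209239, -2813475371126, -4856251014582, 1414900336580, 6416243191000, 3340509089716],
    [-412127491486, 3785697296806, 8484269427090, -3692979534470, -14929235754140,
    -7511771952219], [-1949561948782, 3460371373543, 11132768378312, 3890642974662],
    [-1229401811260, 766469312010]], [[-503920030051, -948316166775, 2004124007069, 4021569965819,
    -863458696906, -5971948637472, -3438872935520], [-3461621524248, -10694059769901,
    2765853155134, 20788884002993, 12828841344768], [-3144321281900, -11788200006906,
    -3762164330728], [-1960963310628]], [[1131136165325, 61244535975, -6229821110086,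
    -5037202608173], [-873444834075, -2278479532705]], [[1710950666652]]], [[[-23786286223,
    -9011192328, 1377558410, -193112042084, 204055715440, 1092151543602, 659627777627,
    -157762983795, -118891988526], [-104265709879, 259144793617, -659248392396, -4521571247499,
    -3228990243858, 1740606652670, 1296445802786], [-398033474583, 2865072517325, 4032858475175,
    -4154047358588, -4112485820871], [-1661825793738, 1792596643741, 4868102682179],
    [-1000316135277]], [[12170562679, 1621971969498, 4759078012741, 2506430328537, -1134174141214,
    -564991368113], [-1487021463551, -2403716694424, 3525528943781, 1716023536792],
    [-344280640715, -3687392967183]], [[317564764738, 1528791645947, 1700309031056],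
    [-704550911774]]])]

/-- Coefficients, as polynomials in `e₃`, `e₂`, `e₁`, of the discriminant root
`(u - v) (v - t) (u - t)` in the antisymmetric square roots. -/
def signRoots : List Coeffs₃ :=
  [[[[384702154966, 1135504083828, -1708711101668, -5627285213933, -307301587089, 2968878972528,
    381736291167, 644906435255], [2385314670583, 17884506399626, 5601240141761, -24952572999614,
    -12509067090050, -6962062725283], [1142090770443, 50785558505997, 25706355040273,
    8665412300063], [-13890985162606, 2747590335005]], [[-23073106342060, -15807221788193,
    11543975503717, 9730405894746, 12900608547460], [-61242533348108, 17836611135958,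
    -23774995349608], [-2391764021544]], [[-35443648512670, 23160604163073]]],
   [[[54091742207, 300555162210, -57080777219, -2801228808768, -2771780701328, 5418902560284,
    9001487904036, 3237647632896], [-493252819051, 5257471916320, 9659515516046, -20945245372755,
    -45159898807026, -19270895205019], [-7239946338905, 12244235531284, 55912002328773,
    33830826439675], [-17378246775910, -20817077399469]], [[-3292502410423, -3826883982950,
    19958877374018, 33254072011015, 11881035105528], [-14428238485385, -38144357030079,
    -13911234339432], [2932108901986]], [[-1361003515171, -6846830495322]]],
   [[[52567992597, 210230194191, 221450076267, -705267034312, -1684840312327, -858314442389,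
    20599295, -17874597215], [-564676813608, 1754533977280, 7625903751925, 4867255212249,
    -1661499222150, -1487182804639], [-5082996609151, -2435757328300, 11099194479288,
    9075858978838], [-8085557701335, -9264333228390]], [[-2348341620537, -5764982653011,
    -4810529857930, -3984065160087, -1759404287078], [-4393262758254, -6965815190620,
    -4612249551629], [2060139400092]], [[-490329699999, 2739698156139]]]]

/-- Square roots even under exchanging `v` and `t`, as polynomials in `u`, `v t`, `v + t`. -/
def evenRoots : List Coeffs₃ :=
  [[[[824104704, 208745461677, 678896169325, -848090085699, -4059598744717, 778818859237,
    6121004443143, -1923838311298, -5079601320915, -574419106113], [1162259904801, 3183380309331,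
    8873846657380, -8700012356128, -38211670433632, -3391315715032, 38966135605685,
    15215814485754], [-4646298464347, 20170355956043, 80113569381053, 70236846667557,
    -86449324450674, -83057947121905], [-31594859323189, -104910535208992, 39703099475868,
    153036099322084], [26157921621826, -84560499642345]], [[117593133143, 3205662186072,
    4145229070124, -10422521038054, -22381890678237, -1024419263536, 4651667953935,
    -5804628894674, -1746340240218], [2929029901347, 16286346273826, 68979620225637,
    -7051486004110, -19609689366966, 34622373698671, 11539261440420], [-5977887723635,
    92533213356025, 29951372781893, -48158263277553, -2215813678087], [-62245409855177,
    14093633885899, -76154623873903], [74643857164746]], [[758260479800, 6898244606852,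
    1229390785131, -18320855912294, -26039424613148, 3785536238515, -9382526270015,
    -7069406728018], [-6057474803545, 49562829026779, 119648330118625, -59657640261700,
    48001479460960, 50489202434384], [-33698537568359, 132538104851819, -24950142515034,
    -111197178933267], [-67599130827276, 82195112979666]], [[3116742178355, 1778448921959,
    -6565406936888, -1046176873451, -20737310042974, 2526590907893, -10990530279498],
    [-5242400171188, 13497154435439, 77526725589729, -20076411594679, 87660174985691],
    [-36755776661196, 32207988762212, -181945247232117], [65042670995446]], [[7033602656035,
    -7837159697295, -15004662091983, 2786336627263, -16989487154884, 5280319576200],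
    [30639420616571, -21668202451877, 72926710652912, -28950933170419], [-47496142772401,
    30917410325094]], [[7406243243735, -6290307863199, -13432050049195, -1643927556098,
    -6696032140552], [42493959937348, -1410123968400, 29770619277165], [-18350142423900]],
    [[7607828828740, 7276425489444, 1254575447582, 3631243692901], [-4837076784851,
    -8308335961633]], [[11700972635108, 5426747644580, 2989356447371], [-19275109127994]],
    [[6519190886631, -5810480493423]], [[-780632943787]]],
   [[[-255232968, 15013381031, -32662156078, -456126390872, 504405981359, 1381820130462,
    -1609887341938, -944828699916, 3185319576185, 2053699261107], [-271721496531, 1340676771716,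
    -1366782047019, -6334472889520, 9026046969157, 7405103223067, -23511605191257,
    -18100505171415], [487076410375, 3382786228125, -14654438595625, -16174736720429,
    53526850486367, 53325594807452], [8783796013210, 10985683151969, -40136257593157,
    -57425575243072], [9794862380560, 10068656257458]], [[10388857928, 93798503825, 756681042126,
    -2357288243760, -2295172632390, 4146442789394, 1431651913828, -525132812831, 2621335284078],
    [-3635208920146, 4702464543261, 14184011566714, -13180738567855, -12443929966220,
    6988181962492, -15796895247860], [-18553601166426, -1922231173646, 30998877763897,
    -24264649357392, 21924762338986], [-13874470967831, 21686966326327, 6497584222156],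
    [-9903401407137]], [[108972643569, 244115596287, 482698462740, -746736325369, -4804887378896,
    -4234204531303, 2705269906102, -5760307845748], [-3069814186510, 238061169106, 24585106852911,
    30923571197100, -15763947082332, 40152329736144], [-28477253927415, -51622029812688,
    25158010159252, -78886222879543], [-6409040756120, 35563051171388]], [[-207604440930,
    6034940200513, -4596307973523, -4860714677582, 21071531060, -9371833679900, 10720549089583],
    [10805883471612, 20762873984526, 5161607335206, 44665923940745, -62948334920451],
    [-14544607211135, -38340603404384, 91013088410340], [-17454197770795]], [[-1604515239682,
    19281738148377, -3745943427625, -6677374173286, 5301497858473, -7647653670729],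
    [12401018168236, 30325018524233, -13381173562205, 35655595495134], [-3948275716212,
    -26861714520622]], [[171213069436, 21075075616614, 2102352048065, 448078508498,
    1008302589300], [-1665591216313, -3105336314997, -1242619391723], [-255525163189]],
    [[4049215706375, 5116140348780, 1946066374529, 2512052056905], [-2059290118086,
    -12452174119251]], [[3531436068332, -41364171689, 1630452452586], [3387467178941]],
    [[4829879968455, 3778150060833]], [[4285860273147]]],
   [[[6428771986, 99401968933, -271896890999, -2860030389566, -1370361174988, 8657662204541,
    10719874932240, 2604326477889, -740064942461, -163442270051], [-314950449568, 9276282578085,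
    10803946267502, -44508687588437, -76180850447383, -23060102168951, 7472469551058,
    4183657348871], [-13268063686834, 41638310084847, 144563044694999, 67762384480502,
    -28532203474102, -23831038592263], [-52464957981266, -51477100473354, 48963291845984,
    35898288725124], [-16620410752181, -2128865233969]], [[27268315432, 1360715050238,
    16050488737, -11506452655863, 488076432707, 20583282963770, 565871756739, 1223170092318,
    7287343812547], [-3134300835793, 29418238470980, 10917311133288, -99141758741180,
    -20529386140266, -59155358050, -50797046981688], [-19056252359826, 91592477359079,
    73998748103144, -19597903270679, 94938535286560], [-34560915811882, 23074740562899,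
    -33082361757619], [-3719047958379]], [[-133800598678, 3976791156211, 2511890343791,
    -15615526399065, -8259357915591, 12091272359239, 1121903171751, -6987464935913],
    [-8677134830058, 35758383450074, 46459824419025, -59839741075381, -9183168412065,
    57128952045365], [-35365010291950, 58322837178003, 27931534235723, -134280943390654],
    [-25835658478610, 85135104939651]], [[-973053078883, 6522524973286, 2523796743110,
    -7884601747082, -1859801753093, -8605943464045, 5711925312226], [-4691376388733,
    22091702157993, 5582592577918, 37025918535140, -31243385532913], [-7738508584474,
    -19826684981516, 32749897853675], [5960065346483]], [[-2841109061574, 6656681605363,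
    919201978300, -3849122643129, 9513078044604, -1045281366342], [-2703991035104, 14940327093455,
    -31468582808731, 3608410641379], [6098183053025, 1933863173054]], [[-4602982127418, 2283207,
    4858409391498, 3327069570189, 662795268553], [-5524200215281, -13505530367170,
    -1437084230100], [4901563404342]], [[-1577604742461, -708430876139, 7010878663625,
    1209108440516], [-10205098693724, -14747142471573]], [[2582070640616, 2282122854175,
    794868548809], [-7695740009295]], [[-2217097814627, -863275171740]], [[-4406045361633]]],
   [[[2853173169, 15015693251, 20729688039, 52087586423, -319708681874, -1502487479422,
    -62026748954, 4114398457840, 3778298573219, 735942144896], [104415967662, 130571291696,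
    1404761655692, 6124433824622, -2358440808369, -29168044653707, -29471390433095,
    -6402688863848], [-1384850842167, -4045784638719, 11918520719657, 60168445781529,
    69852268275952, 18221721062401], [-7689378057482, -29901254868499, -46644642891654,
    -19899003696800], [-1741968964834, 9626571001176]], [[48050572336, 338778293996, 64448379654,
    -1579062182562, -722760873011, 10315897, -772273113270, 3893578281432, 2806866485018],
    [457656242389, 4838026741748, 1983190634853, -2114224068682, 1690157887224, -26113011207357,
    -20636689908309], [3022153813362, 6342583111979, 3227119867572, 49664592717298,
    45701455171102], [2204246638466, -22527704032117, -28245732985106], [-3327140740625]],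
    [[-305778754525, 503292676076, 648649557251, -4905946432264, -2852074222365, 4276992889545,
    876315178785, 1636884680184], [-1037055074284, 15299913086403, 11871087255926,
    -22413091485300, -5813479565650, -9130666552692], [138783410395, 25393320479174,
    10250140332768, 15494432003394], [-3021504225462, -11053507908891]], [[-2219197717832,
    -2219240991688, 3343119738011, -4048679834804, 247141517952, 5254586766713, -1083322287793],
    [-6714178957851, 15993906617445, -2783287469759, -24268624863128, 5164088413857],
    [7868159491692, 23334684043141, -2331683742158], [-6085735715538]], [[-1669405542827,
    -4863702826983, 8362165403738, -690437879600, 4872944072780, 3020907887222], [-19851110000843,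
    3945804151785, -24285128911301, -11567598858502], [20294906365135, 3834977256774]],
    [[5755909439926, 13047783, 9826535438077, 1123846387271, 4005548590670], [-24664814965716,
    -3137488334778, -18535433840010], [13597531798826]], [[7656189645625, 4318809235635,
    5488487227167, 665175382914], [-11162102503913, 8895660183]], [[3140732112746, -232056119354,
    714505790969], [-142353062889]], [[6531906350306, -2099386432818]], [[5773262013446]]]]

/-- Coefficients, as polynomials in `u`, `v t`, `v + t`, of `v - t` in the square roots odd under
exchanging `v` and `t`. -/
def oddRoots : List Coeffs₃ :=
  [[[[123411990241, 134856951133, -2010932631150, -2411076641401, 6052204730106, 9225330293246,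
    -928872912603, -4231835137056, -473199234149], [4552074745467, 7625131745602, -22904168604632,
    -53058672360582, 2422458035089, 33884829523227, 2374613176571], [10382720736058,
    69047342900672, 4651423865666, -69636585355820, -70388412509], [-24699809955628,
    5687617589561, -3059381269164], [5583937483541]], [[-1772195233030, -423635700340,
    11193707076405, 3460173089270, -20843262136593, 529820677174, -407784764277, -10325005246173],
    [-6403052348691, -18289414740282, 56313348210028, -21313287306104, -2860117820320,
    57598784561103], [5815208523197, 79626834834751, 25355637885448, -84426758411778],
    [-55389788373237, 32926730486379]], [[-2014043218148, -5130582527719, 8019739286057,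
    27349826253418, -13891444094281, 1445928433005, 7010193882951], [-22750013569619,
    -88203068593174, 72644089747928, -29094723235233, -26533891892469], [8551605029368,
    34970042103036, 33886760959306], [-26293488946250]], [[7675562723880, -7343493190463,
    -21501732949813, 19089734425146, -9409664614142, 6244730675184], [6250795111927,
    -46426205697039, 47357059685134, -42382924837403], [-24240014762240, 54430243207800]],
    [[1039068521470, -9401218924871, -16926063036553, 2936094883634, -15720279267051],
    [37787234410539, -13572511496486, 53572939154703], [-20820380804726]], [[-21676237849448,
    -10895792784504, 3599007938695, 8268732051294], [6671068327541, -26715985573867]],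
    [[-14180674226211, -6104807372310, -6066259499052], [878924869478]], [[-346209752661,
    844959390650]], [[1370949718687]]],
   [[[-129407301437, -128617787211, 2104776602635, 1257180763189, -7171153968713, -3563727126748,
    5958749578770, -1994294472210, -5227559593037], [-4791956456066, -2518307982416,
    27426073847143, 17598007130148, -26805669849661, 10749617447007, 32832930332696],
    [-21562071181358, -25085291604068, 26593836816468, -11993933099341, -54457684114210],
    [-12141398314843, 1084137690198, 8003683707119], [14576349135586]], [[1838537441640,
    350835402218, -7742732055193, -2258247875576, 5545336645972, -4398785278418, 833603992557,
    1099475449408], [6454143025155, 857103039211, 2930211658693, 34484177111687, -18093086623257,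
    -8402325197401], [-31319672236369, -50879077838827, 59360469894616, 17772528889281],
    [-57656034452211, 7737209648568]], [[7072860781619, 6411724844007, -23502166540526,
    -13554247026542, 13159503023498, -14769341031543, -812068151820], [49363241170375,
    26198368981704, -55166536903818, 69597534058569, 1171279727109], [28847441737623,
    -66084765243579, 11102809052058], [-16576272374833]], [[4207577696563, 23601826777622,
    -11616423645016, -4264916108040, 7963068639837, -10572548967260], [49554911366857,
    11656712698499, -28069529107814, 37753458701903], [9288138171640, -28044579708851]],
    [[-10744808796862, 39552017336526, -7152664991238, 8780290114707, 2926120671991],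
    [29908309694209, -28596977299383, 2685127999103], [-13208594956340]], [[-21887689493073,
    14484874143690, -20888920769079, -2691214755846], [37259553813859, 4212567530254]],
    [[-16456300620274, -8839493607094, -3506554281706], [19016213965292]], [[-566795472134,
    4863626807513]], [[3294955811154]]]]

/-- The remainder of the certificate, as a polynomial in `u v t`, `u v`, `u`: each orbit of
monomials under permutation of the variables has such a representative. -/
def residualCoeffs : Coeffs₃ :=
  [[[0, 253168362292447, -29460607784975742, -6079656664002663, -19879187374128476,
    -5157338076243278, 1494404337093912, 26688160009963042, -24373826416077046, -5226363933628004,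
    21370806313182678, 15852175529280695, -30699213968838961, -18876379832050887,
    15026994098456317, 21172947163132764, -10754915400455066, -7563760899757053, 2677598938154791,
    2201913090039105, -517866880055432], [27953730426660942, 11841348929738248,
    -12367495799694200, 31516877659807434, 43690805588719088, -38633856715867862,
    -32265966971034132, 6532395576672612, 36553994298143240, 3045719870892170, 10285811361761852,
    -3251006065706578, 3717220822278340, -2720521648024172, -411860238642836, 1427518254874944,
    772510983102904, -158180366594134, -165070916522892], [-7205263936492777, 26746650663199182,
    -54839242713110704, 10919049034721114, -8703594480875142, 34379968800135914,
    48576561555928342, -72028224841312644, -21109532337540336, 9570018187088344, 83573408864260,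
    -407679667087490, -707417861852184, 7892365277956318, 2679748029477048, 345028043862518,
    -969160742040948], [76106989266252618, -92984033207155818, -279868642312159840,
    40004721659173246, 81443118787221544, 155081916660306994, 45799416144876368,
    -102829937080669868, 6805732796276840, -174294991129416, 10667089189521788, 14679617672887922,
    9392197752462780, 850284151157188, -1801030291138912], [101959609620914538,
    108104628019387762, 20847956135245860, -12232801102291490, -124940678345200326,
    -28475027963847046, -53884302487620746, 16424346727883550, 17947607060976006,
    24923594696330130, 13191728635700294, 3889215708140924, -3835917355477558],
    [134615172565968050, 277026755461964318, -64173922048047776, -601991270169825816,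
    75436364725202856, 194799472888832214, 25987144952917272, 26583429767843226,
    18520524632377288, 2866693113480860, -8437407732055072], [-378247521999687486,
    -327081935567931644, 452657080379430172, -6312753264209070, -157685428132378338,
    30866217323809896, 23184827696861870, -6335224580057668, -17187260414172630],
    [142017921112836602, 68233939790042506, -91970128161488952, 346376317104806036,
    34898397816168800, -21292480952758864, -23669248448445228], [206803805945675998,
    203306211572093916, -521765531090381720, -31577577065902606, -22400756226191106],
    [-60969231713142588, 113610387859962622, -16058138481229312], [-37303625089083273]],
   [[11760408329436912, 26876297423973178, -4656567744720830, 9751593347706176, 13064330187900604,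
    -92252986195128492, -202079409353638, 99418798595427150, -9632650105566696, 5360999419699356,
    7085056187613420, 2892944584857288, -2013753294738968, -362394530362394, 5214040831340370,
    2679490938853676, -338734864522342, -1097998030958046], [46514654413380118, 863879472336824,
    -494011315797665560, 339431742865821612, 866384391440667518, -851228785495547064,
    -410458049681709166, 467740753794126708, 25620520679293578, 15631295887670388,
    -6993599849444226, 10558117805064344, 28493766017348554, 20302999583932468, -1476653395666276,
    -7707428299589544], [197061279618735754, 91158496352792848, -1124832297416277752,
    -142240426786878572, 6297449630577652, 204692746376581308, 466816465782409100,
    2037461004509496, 6922810600122148, 42530746089417404, 52001812641769116, 42041087507380900,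
    9859899862979152, -15509719594819352], [977127262887044463, -1350469443840407068,
    -1406932281007207956, 1439299139272138488, -208845808584206942, 131873671691609320,
    17711870428950124, 64967724771026532, 62800469227332256, 51588289438184240, 24131175395121626,
    -23492415955223624], [1537176349609381604, 1038698596028213968, -124284256415484936,
    105914933381868060, 361051266937125396, 52977864607388072, 66169695898067944,
    60965467201274204, 10850395584181456, -44465129795456272], [-333302901529670631,
    1341527869548587632, 43772929629958552, -2116243952180606648, 122468829811302342,
    99249842435935968, -47945427225496444, -74148342943431212], [-2205034467532903084,
    -912573222780744128, 3186938391418939480, 139713815624728108, -95892478918478632,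
    -71872573986667876], [641167651370524799, -981019658531320612, -98058727204534562,
    -15869732701087136], [855371159235569568, 41449457577077304]],
   [[-46819408016095513, -135358306980677171, 153608432659486404, 203399004156263279,
    761034698092991106, -204685710940718492, -736457833218308632, 22053073387273188,
    13554978538893910, -1307461664823764, 20358472569931211, 34527556884705918, 30424930838874917,
    6935338311479759, -11572633815194976], [9029580784608934, 1459377133394082876,
    -1995502017823784248, 77706289948110678, 2428502718060408288, -1967166106087469180,
    -3398140909858504, 6648872564654734, 107068839696344572, 69143946352940540, 91037698808512120,
    70888928330348158, -28935497519673572], [-706108481007842941, -853836577996993998,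
    -2591745191297526166, -519876074901230798, -911276102348882982, -62314541316851438,
    103948373655798810, 16597842225321494, 54158140344582048, 102042798392859776,
    -23814697081259980], [1682959566026018162, -5375564590786479206, 42864201659647304,
    4646571685359441996, 117107759341733204, -889563535786670, 25712202664761340,
    13061812561801914, -74759636186831704], [5411210009324191187, 2198134251093697112,
    -4564605499074462960, 134982910962287624, 87906902616148052, -130682030686905838,
    -124588861797239260], [-814127388311054852, 4807341267262052448, 157128228417076032,
    -143947344150326312, -31075423852431172], [-4041627508211944238, -65588069459229758,
    186524332096284166], [147753004237203216]],
   [[-259374817902222350, -580756765286955808, 1826538827648819018, 659524253548207576,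
    2066687464385070582, -33703272309456656, -28092638567149194, 103537702297898532,
    -9881521396040974, 33112252320636912, 94249657530620198, 2342842957350560],
    [-2809136896737040717, 7322250335341720480, 1636886697213983474, -3579809359621553472,
    -314913684483371652, 207369614507514788, -140703730194479308, -61885091666369360,
    154212392102009432, 27711802709012900], [-8147705157113572566, -2279814683724916260,
    1449973298656483028, 318330379753691076, -165543837128212304, -134381174490165312,
    -56963819955279128, -102538601676665564], [755261080393140246, -9055351133421588060,
    -11430615620719046, -57128000490786996, -195128107131360640, -125287088996790216],
    [8409995908941040462, -18881297728813824, -58770373690421632, 190870422397732468],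
    [26828755113478705, 566585353886509044]],
   [[2250039646668080582, 554170735889430093, 542691970893346553, -362138929192060565,
    129569349000591256, -116652070328459787, -137283545385315415, -12253592910312145,
    -5893668657521537], [-7502636357197240862, 10219116644704800660, 638014920344220244,
    -65174911876954842, -409094623574812948, -277450862772354414, -212062210670675356],
    [-8720309795599327220, 306058975056080386, -426792972700767456, -326498586577377768,
    -50049604801245274], [-216244649339079420, -158400133944636090, 497774999912214400],
    [410966023885964537]],
   [[5433793325736111366, 568343413343173878, 316231260106272282, -363509427784117222,
    -279571534939584330, -135632975340469100], [603645435351992808, -835282165779796332,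
    -742687652988630438, 161691808296903572], [-356914073773246024, 716399624896001520]],
   [[-153334837067786701, -532815004260936612, 295124533953266854], [392610842942290508]]]

/-- The positive constant of the certificate, which absorbs the remainder. -/
def slack : ℤ := 928449874447744061407

/-- The three-point kernel of the certificate. -/
def kernel : PolyExpr (Fin 3) := (kernelTerms.map KernelTerm.toPolyExpr).sum

/-- The first elementary symmetric polynomial. -/
def e₁ : PolyExpr (Fin 3) := u + v + t

/-- The second elementary symmetric polynomial. -/
def e₂ : PolyExpr (Fin 3) := u * v + u * t + v * t

/-- The third elementary symmetric polynomial. -/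
def e₃ : PolyExpr (Fin 3) := u * v * t

/-- The polynomials whose squares enter the certificate, split according to the trivial, standard
and sign representations of the symmetric group of the three variables. -/
def squareRoots : List (PolyExpr (Fin 3)) :=
  trivialRoots.map (fun c => (trivariate c).subst ![e₃, e₂, e₁])
    ++ standardRoots.map (fun c => (const 3 * u - e₁) * (trivariate c.1).subst ![e₃, e₂, e₁]
      + (const 3 * u * u - (u * u + v * v + t * t)) * (trivariate c.2).subst ![e₃, e₂, e₁])
    ++ signRoots.map fun c => (u - v) * (v - t) * (u - t) * (trivariate c).subst ![e₃, e₂, e₁]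

/-- The polynomials whose squares enter the certificate with the factor `(u + 1) (1 - 2 u)`, which
is nonnegative for `u ∈ [-1, 1/2]`, split into those even and those odd under exchanging `v`
and `t`. -/
def intervalRoots : List (PolyExpr (Fin 3)) :=
  evenRoots.map (fun c => (trivariate c).subst ![u, v * t, v + t])
    ++ oddRoots.map fun c => (v - t) * (trivariate c).subst ![u, v * t, v + t]

/-- The remainder of the certificate, dominated by `slack`. -/
def residual : PolyExpr (Fin 3) := (trivariate residualCoeffs).subst ![u * v * t, u * v, u]

/-- The part of the certificate that is positive on triples from a kissing configuration. -/
def positivePart : PolyExpr (Fin 3) :=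
  sumSq squareRoots + (u + 1) * (1 - const 2 * u) * sumSq intervalRoots + (const slack + residual)

/-- The combination, for `79` points, whose symmetrization is the zero polynomial. -/
def certificate : PolyExpr (Fin 3) := spreadDegenerate 79 kernel + positivePart

theorem isGegenbauer_of_mem_kernelTerms : ∀ T ∈ kernelTerms, T.IsGegenbauer 5 := by
  decide +kernel

theorem l1Bound_residual_lt_slack : (residual.l1Bound : ℤ) < slack := by decide +kernel

theorem degBound_certificate_le : certificate.degBound ≤ 20 := by decide +kernel

theorem l1Bound_certificate_lt : 6 * certificate.l1Bound < 2 ^ 129 := by decide +kernel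

set_option exponentiation.threshold 100000 in
theorem eval_kronecker_symmetrize_certificate : certificate.symmetrize.eval
    (fun i : Fin 3 => (((2 ^ 129) ^ (20 + 1) ^ (i : ℕ) : ℕ) : ℤ)) = 0 := by
  decide +kernel

theorem eval_symmetrize_certificate (r : Fin 3 → ℝ) : certificate.symmetrize.eval r = 0 :=
  eval_eq_zero_of_eval_kronecker_eq_zero
    (certificate.degBound_symmetrize.trans_le degBound_certificate_le)
    (certificate.l1Bound_symmetrize.trans_lt l1Bound_certificate_lt)
    eval_kronecker_symmetrize_certificate r

theorem eval_positivePart_pos {r : Fin 3 → ℝ} (hr : ∀ i, |r i| ≤ 1) (hr₀ : r 0 ≤ 1 / 2) :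
    0 < positivePart.eval r := by
  have hsquares := eval_sumSq_nonneg r squareRoots
  have hinterval : 0 ≤ (r 0 + 1) * (1 - 2 * r 0) * (sumSq intervalRoots).eval r :=
    mul_nonneg (mul_nonneg (by linarith [neg_le_of_abs_le (hr 0)]) (by linarith))
      (eval_sumSq_nonneg r intervalRoots)
  have hresidual : 0 < slack + residual.eval r := by
    have habs := neg_le_of_abs_le (abs_eval_le_l1Bound hr residual)
    have hslack : (residual.l1Bound : ℝ) < slack := by exact_mod_cast l1Bound_residual_lt_slack
    linarith
  simp only [positivePart, eval_add, eval_mul, eval_sub, eval_var, eval_const, eval_one]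
  push_cast
  linarith

variable {E : Type*} [NormedAddCommGroup E] [InnerProductSpace ℝ E]

theorem sum_eval_kernel_nonneg [FiniteDimensional ℝ E] (hE : Module.finrank ℝ E = 6) {S : Finset E}
    (hS : ∀ y ∈ S, ‖y‖ = 1) {x : E} (hx : ‖x‖ = 1) :
    0 ≤ ∑ y ∈ S, ∑ z ∈ S, kernel.eval (gramTriple x y z) := by
  refine sum_eval_list_sum_nonneg fun e he => ?_
  obtain ⟨T, hT, rfl⟩ := List.mem_map.mp he
  exact T.sum_eval_toPolyExpr_nonneg (isGegenbauer_of_mem_kernelTerms T hT) hE hS hx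

end DimensionSix

section KissingConfigurations

open scoped RealInnerProductSpace

variable {E : Type*} [NormedAddCommGroup E] [InnerProductSpace ℝ E] {x y z : E}

theorem abs_gramTriple_le_one (hx : ‖x‖ = 1) (hy : ‖y‖ = 1) (hz : ‖z‖ = 1) (i : Fin 3) :
    |gramTriple x y z i| ≤ 1 := by
  have hinner {a b : E} (ha : ‖a‖ = 1) (hb : ‖b‖ = 1) : |⟪a, b⟫| ≤ 1 := by
    simpa [ha, hb] using abs_real_inner_le_norm a b
  fin_cases i
  exacts [hinner hx hy, hinner hx hz, hinner hy hz]

theorem inner_le_half_of_one_le_dist (hx : ‖x‖ = 1) (hy : ‖y‖ = 1) (hxy : 1 ≤ dist x y) :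
    ⟪x, y⟫ ≤ 1 / 2 := by
  have hsq : 1 ≤ ‖x - y‖ ^ 2 := one_le_pow₀ (dist_eq_norm x y ▸ hxy)
  rw [norm_sub_sq_real, hx, hy] at hsq
  linarith

open DimensionSix in
theorem card_ne_79_of_one_le_dist [FiniteDimensional ℝ E] (hE : Module.finrank ℝ E = 6)
    {S : Finset E} (hnorm : ∀ x ∈ S, ‖x‖ = 1)
    (hdist : ∀ x ∈ S, ∀ y ∈ S, x ≠ y → 1 ≤ dist x y) : S.card ≠ 79 := by
  intro hcard
  refine PolyExpr.false_of_eval_symmetrize_eq_zero (K := kernel) (P := positivePart) (by omega)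
    hnorm (fun x hx => sum_eval_kernel_nonneg hE hnorm (hnorm x hx)) (fun x hx y hy z hz hxy => ?_)
    (hcard ▸ eval_symmetrize_certificate)
  exact eval_positivePart_pos (abs_gramTriple_le_one (hnorm x hx) (hnorm y hy) (hnorm z hz))
    (inner_le_half_of_one_le_dist (hnorm x hx) (hnorm y hy) (hdist x hx y hy hxy))

end KissingConfigurations

theorem kissing_number_dim6_le_78
    (S : Finset (EuclideanSpace ℝ (Fin 6)))
    (hnorm : ∀ x ∈ S, ‖x‖ = 1)
    (hdist : ∀ x ∈ S, ∀ y ∈ S, x ≠ y → 1 ≤ dist x y) :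
    S.card ≤ 78 := by
  by_contra! hcard
  obtain ⟨T, hTS, hT⟩ := Finset.exists_subset_card_eq (show 79 ≤ S.card from hcard)
  exact card_ne_79_of_one_le_dist finrank_euclideanSpace_fin (fun x hx => hnorm x (hTS hx))
    (fun x hx y hy => hdist x (hTS hx) y (hTS hy)) hT
end
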